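/- arXiv:1903.07228 — 3 statements merged into one kernel-verified Lean document; each statement's English description precedes it below -/
import Mathlib

section
/- Convergence of quasi-stochastic approximation (Theorem 1). Suppose Assumptions (A1)–(A5) hold, that sup_{t≥0} ‖f(0, ξ(t))‖ < ∞, and that θ : [0,∞) → ℝ^d is a continuously differentiable solution of the QSA ODE dθ/dt(t) = a(t)·f(θ(t), ξ(t)) for t ≥ 0. Then θ(t) → θ* as t → ∞, for every initial condition θ(0). -/
open intervalIntegral Filter

lemma exp_int_bound {E : Type*} [NormedAddCommGroup E] [NormedSpace ℝ E]
    (G : ℝ → E) (C k : ℝ) (hk : 0 < k) (hC : 0 ≤ C)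
    (h : ∀ s, 0 ≤ s → ‖G s‖ ≤ C * Real.exp (k * s)) (t : ℝ) (ht : 0 ≤ t) :
    ‖∫ s in (0:ℝ)..t, G s‖ ≤ C / k * Real.exp (k * t) := by
  have hd : ∀ x ∈ Set.uIcc 0 t, HasDerivAt (fun s : ℝ => C / k * Real.exp (k * s))
      (C * Real.exp (k * x)) x := by
    intro x _
    have h1 : HasDerivAt (fun s : ℝ => k * s) k x := by
      simpa using (hasDerivAt_id x).const_mul k
    have := (h1.exp).const_mul (C / k)
    exact this.congr_deriv (by field_simp)
  have hc : Continuous (fun s : ℝ => C * Real.exp (k * s)) := by fun_prop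
  have h2 : ‖∫ s in (0:ℝ)..t, G s‖ ≤ ∫ s in (0:ℝ)..t, C * Real.exp (k * s) := by
    apply intervalIntegral.norm_integral_le_of_norm_le ht _ (hc.intervalIntegrable _ _)
    exact Filter.Eventually.of_forall fun s hs => h s hs.1.le
  rw [intervalIntegral.integral_eq_sub_of_hasDerivAt hd (hc.intervalIntegrable _ _)] at h2
  have : 0 ≤ C / k * Real.exp (k * 0) := by positivity
  linarith

lemma ode_exists {E : Type*} [NormedAddCommGroup E] [NormedSpace ℝ E] [CompleteSpace E]
    (v : E → E) (K : ℝ) (hK : 0 < K) (hv : ∀ x y, ‖v y - v x‖ ≤ K * ‖y - x‖) (x0 : E) :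
    ∃ χ : ℝ → E, χ 0 = x0 ∧ ∀ w : ℝ, 0 ≤ w → HasDerivAt χ (v (χ w)) w := by
  have hvc : Continuous v := by
    have : LipschitzWith (Real.toNNReal K) v := by
      apply LipschitzWith.of_dist_le_mul
      intro x y
      rw [dist_eq_norm, dist_eq_norm, Real.coe_toNNReal _ hK.le]
      exact hv y x
    exact this.continuous
  have hk : 0 < 2 * K := by positivity
  let I : (BoundedContinuousFunction ℝ E) → ℝ → E :=
    fun u s => v (x0 + Real.exp (2 * K * |s|) • u s)
  have hI : ∀ u, Continuous (I u) := fun u => by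
    have := u.continuous
    fun_prop
  have hIb : ∀ u s, 0 ≤ s → ‖I u s‖ ≤ (‖v x0‖ + K * ‖u‖) * Real.exp (2 * K * s) := by
    intro u s hs
    have h1 := hv x0 (x0 + Real.exp (2 * K * |s|) • u s)
    have h2 : ‖I u s‖ ≤ ‖v x0‖ + ‖I u s - v x0‖ := by
      have := norm_add_le (v x0) (I u s - v x0)
      simpa using this
    have h3 := u.norm_coe_le_norm s
    rw [add_sub_cancel_left, norm_smul, Real.norm_eq_abs, Real.abs_exp, abs_of_nonneg hs] at h1
    have h4 : 1 ≤ Real.exp (2 * K * s) := Real.one_le_exp (by positivity)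
    have h5 : Real.exp (2 * K * s) * ‖u s‖ ≤ Real.exp (2 * K * s) * ‖u‖ := by gcongr
    have h6 : ‖v x0‖ * 1 ≤ ‖v x0‖ * Real.exp (2 * K * s) := by gcongr
    have h7 := mul_le_mul_of_nonneg_left h5 hK.le
    have h8 : ‖I u s - v x0‖ ≤ K * (Real.exp (2 * K * s) * ‖u s‖) := by
      simpa [I, abs_of_nonneg hs] using h1
    nlinarith
  have hIc : ∀ u, Continuous (fun t : ℝ => Real.exp (-(2 * K * |t|)) • ∫ s in (0:ℝ)..|t|, I u s) := by
    intro u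
    have h1 : Continuous (fun t : ℝ => ∫ s in (0:ℝ)..t, I u s) :=
      intervalIntegral.continuous_primitive (fun a b => (hI u).intervalIntegrable a b) 0
    have h2 : Continuous (fun t : ℝ => ∫ s in (0:ℝ)..|t|, I u s) := h1.comp continuous_abs
    fun_prop
  have hIbd : ∀ u (t : ℝ), ‖Real.exp (-(2 * K * |t|)) • ∫ s in (0:ℝ)..|t|, I u s‖ ≤
      (‖v x0‖ + K * ‖u‖) / (2 * K) := by
    intro u t
    rw [norm_smul, Real.norm_eq_abs, Real.abs_exp]
    have := exp_int_bound (I u) _ _ hk (by positivity) (hIb u) |t| (abs_nonneg t)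
    calc _ ≤ Real.exp (-(2 * K * |t|)) * ((‖v x0‖ + K * ‖u‖) / (2 * K) * Real.exp (2 * K * |t|)) := by
          gcongr
      _ = (‖v x0‖ + K * ‖u‖) / (2 * K) * (Real.exp (-(2 * K * |t|)) * Real.exp (2 * K * |t|)) := by ring
      _ = _ := by rw [← Real.exp_add]; simp
  let Φ : BoundedContinuousFunction ℝ E → BoundedContinuousFunction ℝ E := fun u =>
    BoundedContinuousFunction.ofNormedAddCommGroup _ (hIc u) _ (hIbd u)
  have hΦ : ContractingWith (1/2) Φ := by
    refine ⟨by norm_num, ?_⟩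
    apply LipschitzWith.of_dist_le_mul
    intro u w
    rw [BoundedContinuousFunction.dist_le (by positivity)]
    intro t
    have e1 : Φ u t - Φ w t = Real.exp (-(2 * K * |t|)) • ∫ s in (0:ℝ)..|t|, (I u s - I w s) := by
      rw [intervalIntegral.integral_sub ((hI u).intervalIntegrable _ _)
        ((hI w).intervalIntegrable _ _), smul_sub]
      rfl
    rw [dist_eq_norm, e1, norm_smul, Real.norm_eq_abs, Real.abs_exp]
    have hb : ∀ s, 0 ≤ s → ‖I u s - I w s‖ ≤ (K * dist u w) * Real.exp (2 * K * s) := by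
      intro s hs
      refine (hv _ _).trans ?_
      rw [add_sub_add_left_eq_sub, ← smul_sub, norm_smul, Real.norm_eq_abs, Real.abs_exp,
        abs_of_nonneg hs, ← dist_eq_norm]
      have := BoundedContinuousFunction.dist_coe_le_dist (f := u) (g := w) s
      calc _ ≤ K * (Real.exp (2 * K * s) * dist u w) := by gcongr
        _ = _ := by ring
    have := exp_int_bound (fun s => I u s - I w s) _ _ hk (by positivity) hb |t| (abs_nonneg t)
    calc _ ≤ Real.exp (-(2 * K * |t|)) * ((K * dist u w) / (2 * K) * Real.exp (2 * K * |t|)) := by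
          gcongr
      _ = (K * dist u w) / (2 * K) * (Real.exp (-(2 * K * |t|)) * Real.exp (2 * K * |t|)) := by ring
      _ = _ := by
        rw [← Real.exp_add]; simp; field_simp
  obtain ⟨u, hu⟩ : ∃ u, Φ u = u := ⟨_, hΦ.fixedPoint_isFixedPt⟩
  refine ⟨fun t => x0 + ∫ s in (0:ℝ)..t, I u s, by simp, ?_⟩
  intro w hw
  have h1 := (((hI u).integral_hasStrictDerivAt 0 w).hasDerivAt).const_add x0
  convert h1 using 1
  simp only [I]
  congr 2
  have h2 : u w = Φ u w := by rw [hu]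
  have h3 : Φ u w = Real.exp (-(2 * K * |w|)) • ∫ s in (0:ℝ)..|w|, I u s := rfl
  rw [h2, h3, smul_smul, ← Real.exp_add]
  simp [abs_of_nonneg hw, I]

lemma growth {E : Type*} [NormedAddCommGroup E] [NormedSpace ℝ E]
    (F : E → ℝ → E) (K : ℝ) (hK : 0 < K) (hF : ∀ x t, 0 ≤ t → ‖F x t‖ ≤ K * (1 + ‖x‖))
    (a g : ℝ → ℝ) (ha : ∀ t, 0 < a t) (hg : ∀ t, HasDerivAt g (a t) t)
    (θ : ℝ → E) (hθ : ∀ t, 0 ≤ t → HasDerivAt θ (a t • F (θ t) t) t)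
    (s t : ℝ) (hs : 0 ≤ s) (hst : s ≤ t) :
    1 + ‖θ t‖ ≤ (1 + ‖θ s‖) * Real.exp (2 * K * (g t - g s)) := by
  have key := image_norm_le_of_norm_deriv_right_lt_deriv_boundary (f := θ) (a := s) (b := t)
    (f' := fun t => a t • F (θ t) t)
    (B := fun u => (1 + ‖θ s‖) * Real.exp (2 * K * (g u - g s)) - 1)
    (B' := fun u => (1 + ‖θ s‖) * (Real.exp (2 * K * (g u - g s)) * (2 * K * a u)))
    (fun x hx => (hθ x (hs.trans hx.1)).continuousAt.continuousWithinAt)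
    (fun x hx => (hθ x (hs.trans hx.1)).hasDerivWithinAt)
    (by simp)
    (fun x => ((((hg x).sub_const (g s)).const_mul (2 * K)).exp.const_mul (1 + ‖θ s‖)).sub_const 1)
    ?_ (Set.right_mem_Icc.2 hst)
  · linarith
  · intro x hx hB
    rw [norm_smul, Real.norm_eq_abs, abs_of_pos (ha x)]
    have h1 := hF (θ x) x (hs.trans hx.1)
    set e := (1 + ‖θ s‖) * Real.exp (2 * K * (g x - g s)) with he
    have he0 : 0 < e := by positivity
    have h2 : 1 + ‖θ x‖ = e := by rw [hB]; ring
    rw [h2] at h1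
    have h3 : 0 < a x * (K * e) := mul_pos (ha x) (mul_pos hK he0)
    calc a x * ‖F (θ x) x‖ ≤ a x * (K * e) := by gcongr; exact (ha x).le
      _ < 2 * (a x * (K * e)) := by linarith
      _ = _ := by rw [he]; ring

lemma window_bound {E : Type*} [NormedAddCommGroup E] [NormedSpace ℝ E]
    (H : E → ℝ → E) (K : ℝ) (hK : 0 < K)
    (hHb : ∀ x t, 0 ≤ t → ‖H x t‖ ≤ K * (1 + ‖x‖))
    (hHl : ∀ x y t, ‖H y t - H x t‖ ≤ K * ‖y - x‖)
    (hHi : ∀ x p q, 0 ≤ p → p ≤ q → IntervalIntegrable (H x) MeasureTheory.volume p q)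
    (hHint : ∀ x p q, 0 ≤ p → p ≤ q → ‖∫ r in p..q, H x r‖ ≤ K * (1 + ‖x‖))
    (a g : ℝ → ℝ) (hac : Continuous a) (ha : ∀ t, 0 < a t) (had : Antitone a)
    (hg : ∀ t, HasDerivAt g (a t) t)
    (θ : ℝ → E)
    (hθi : ∀ p q, 0 ≤ p → p ≤ q →
      IntervalIntegrable (fun r => a r • H (θ r) r) MeasureTheory.volume p q)
    (s u R ℓ : ℝ) (hs : 0 ≤ s) (hℓ : 0 < ℓ) (hR : ∀ r, s ≤ r → r ≤ u → 1 + ‖θ r‖ ≤ R)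
    (hlip : ∀ p r, s ≤ p → p ≤ r → r ≤ u → ‖θ r - θ p‖ ≤ a s * K * R * (r - p))
    (p q : ℝ) (hsp : s ≤ p) (hpq : p ≤ q) (hqu : q ≤ u) (hqp : q - p ≤ ℓ) :
    ‖∫ r in p..q, a r • H (θ r) r‖ ≤
      K * R * (a p + (a p - a q) * ℓ + K * a s * ℓ * (g q - g p)) := by
  have hp : 0 ≤ p := hs.trans hsp
  have hRp := hR p hsp (hpq.trans hqu)
  have hR0 : 0 < R := lt_of_lt_of_le (by positivity) hRp
  have hapq : a q ≤ a p := had hpq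
  have e1 : ∫ r in p..q, a r • H (θ r) r = a p • (∫ r in p..q, H (θ p) r) +
      ∫ r in p..q, (a r • H (θ r) r - a p • H (θ p) r) := by
    have hi2 : IntervalIntegrable (fun r => a p • H (θ p) r) MeasureTheory.volume p q :=
      (hHi (θ p) p q hp hpq).smul (a p)
    rw [intervalIntegral.integral_sub (hθi p q hp hpq) hi2, intervalIntegral.integral_smul]
    abel
  have hc : Continuous fun r => (a p - a q) * (K * R) + a r * (K * (a s * K * R * ℓ)) := by
    fun_prop
  have e2 : ‖∫ r in p..q, (a r • H (θ r) r - a p • H (θ p) r)‖ ≤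
      ∫ r in p..q, ((a p - a q) * (K * R) + a r * (K * (a s * K * R * ℓ))) := by
    apply intervalIntegral.norm_integral_le_of_norm_le hpq _ (hc.intervalIntegrable _ _)
    refine Filter.Eventually.of_forall fun r hr => ?_
    have e3 : a r • H (θ r) r - a p • H (θ p) r =
        (a r - a p) • H (θ p) r + a r • (H (θ r) r - H (θ p) r) := by
      rw [sub_smul, smul_sub]; abel
    rw [e3]
    refine (norm_add_le _ _).trans ?_
    rw [norm_smul, norm_smul, Real.norm_eq_abs, Real.norm_eq_abs, abs_of_pos (ha r), abs_sub_comm,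
      abs_of_nonneg (sub_nonneg.2 (had hr.1.le))]
    have h1 : a q ≤ a r := had hr.2
    have h2 := hHb (θ p) r (hp.trans hr.1.le)
    have h3 := hHl (θ p) (θ r) r
    have h4 := hlip p r hsp hr.1.le (hr.2.trans hqu)
    have h5 : a s * K * R * (r - p) ≤ a s * K * R * ℓ := by
      have := ha s
      have : r - p ≤ ℓ := by linarith [hr.2]
      gcongr
    have h6 : ‖H (θ p) r‖ ≤ K * R := h2.trans (by gcongr)
    have h7 : ‖H (θ r) r - H (θ p) r‖ ≤ K * (a s * K * R * ℓ) :=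
      h3.trans (by gcongr; exact h4.trans h5)
    have := ha r
    gcongr
  have e4 : ∫ r in p..q, ((a p - a q) * (K * R) + a r * (K * (a s * K * R * ℓ))) =
      (a p - a q) * (K * R) * (q - p) + (K * (a s * K * R * ℓ)) * (g q - g p) := by
    have hd : ∀ x ∈ Set.uIcc p q, HasDerivAt
      (fun r => (a p - a q) * (K * R) * r + (K * (a s * K * R * ℓ)) * g r)
      ((a p - a q) * (K * R) + a x * (K * (a s * K * R * ℓ))) x := by
      intro x _
      have := ((hasDerivAt_id x).const_mul ((a p - a q) * (K * R))).add
        ((hg x).const_mul (K * (a s * K * R * ℓ)))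
      exact this.congr_deriv (by ring)
    rw [intervalIntegral.integral_eq_sub_of_hasDerivAt hd (hc.intervalIntegrable _ _)]
    ring
  have e5 : ‖a p • (∫ r in p..q, H (θ p) r)‖ ≤ a p * (K * R) := by
    rw [norm_smul, Real.norm_eq_abs, abs_of_pos (ha p)]
    have := ha p
    have h2 := hHint (θ p) p q hp hpq
    gcongr
    exact h2.trans (by gcongr)
  have e6 : (a p - a q) * (K * R) * (q - p) ≤ (a p - a q) * (K * R) * ℓ := by
    have : 0 ≤ a p - a q := by linarith
    gcongr
  rw [e1]
  refine (norm_add_le _ _).trans ?_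
  rw [e4] at e2
  calc _ ≤ a p * (K * R) + ((a p - a q) * (K * R) * ℓ + (K * (a s * K * R * ℓ)) * (g q - g p)) := by
        linarith
    _ = _ := by ring

lemma avg_bound {E : Type*} [NormedAddCommGroup E] [NormedSpace ℝ E]
    (H : E → ℝ → E) (K : ℝ) (hK : 0 < K)
    (hHb : ∀ x t, 0 ≤ t → ‖H x t‖ ≤ K * (1 + ‖x‖))
    (hHl : ∀ x y t, ‖H y t - H x t‖ ≤ K * ‖y - x‖)
    (hHi : ∀ x p q, 0 ≤ p → p ≤ q → IntervalIntegrable (H x) MeasureTheory.volume p q)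
    (hHint : ∀ x p q, 0 ≤ p → p ≤ q → ‖∫ r in p..q, H x r‖ ≤ K * (1 + ‖x‖))
    (a g : ℝ → ℝ) (hac : Continuous a) (ha : ∀ t, 0 < a t) (had : Antitone a)
    (hg : ∀ t, HasDerivAt g (a t) t)
    (θ : ℝ → E)
    (hθi : ∀ p q, 0 ≤ p → p ≤ q →
      IntervalIntegrable (fun r => a r • H (θ r) r) MeasureTheory.volume p q)
    (s u R ℓ : ℝ) (hs : 0 ≤ s) (hℓ : 0 < ℓ) (hR : ∀ r, s ≤ r → r ≤ u → 1 + ‖θ r‖ ≤ R)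
    (hlip : ∀ p r, s ≤ p → p ≤ r → r ≤ u → ‖θ r - θ p‖ ≤ a s * K * R * (r - p))
    (n : ℕ) (q : ℝ) (hsq : s ≤ q) (hqu : q ≤ u) (hn : q - s ≤ n * ℓ) :
    ‖∫ r in s..q, a r • H (θ r) r‖ ≤
      K * R * (a s + (g q - g s) / ℓ + (a s - a q) * (ℓ + 1) + K * a s * ℓ * (g q - g s)) := by
  have hR0 : 0 < R := lt_of_lt_of_le (by positivity) (hR s le_rfl (hsq.trans hqu))
  have hgm : ∀ p q, p ≤ q → (q - p) * a q ≤ g q - g p := by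
    intro p q hpq
    have hd : ∀ x ∈ Set.uIcc p q, HasDerivAt g (a x) x := fun x _ => hg x
    rw [← intervalIntegral.integral_eq_sub_of_hasDerivAt hd (hac.intervalIntegrable _ _)]
    have : ∫ r in p..q, a q = (q - p) * a q := by simp
    rw [← this]
    apply intervalIntegral.integral_mono_on hpq (by simp) (hac.intervalIntegrable _ _)
    intro x hx
    exact had hx.2
  induction n generalizing q with
  | zero =>
    have : q = s := by
      simp at hn; linarith
    subst this
    have := ha q
    simp
    positivity
  | succ n ih =>
    rcases le_total (q - s) ℓ with h | h
    · have := window_bound H K hK hHb hHl hHi hHint a g hac ha had hg θ hθi s u R ℓ hs hℓ hR hlip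
        s q le_rfl hsq hqu h
      refine this.trans ?_
      have h1 : 0 ≤ g q - g s := le_trans (mul_nonneg (by linarith) (ha q).le) (hgm s q hsq)
      have h2 : 0 ≤ (g q - g s) / ℓ := by positivity
      have h3 : 0 ≤ a s - a q := sub_nonneg.2 (had hsq)
      gcongr
      · linarith
      · linarith
    · have hsp : s ≤ q - ℓ := by linarith
      have hpq : q - ℓ ≤ q := by linarith
      have h0 := ih (q - ℓ) hsp (by linarith) (by push_cast at hn; linarith)
      have h1 := window_bound H K hK hHb hHl hHi hHint a g hac ha had hg θ hθi s u R ℓ hs hℓ hR hlip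
        (q - ℓ) q hsp hpq hqu (by linarith)
      have h2 := hgm _ _ hpq
      rw [← intervalIntegral.integral_add_adjacent_intervals (hθi s (q - ℓ) hs hsp)
        (hθi (q - ℓ) q (hs.trans hsp) hpq)]
      refine (norm_add_le _ _).trans ((add_le_add h0 h1).trans ?_)
      rw [← mul_add]
      refine mul_le_mul_of_nonneg_left ?_ (by positivity)
      have h3 : a q ≤ (g q - g (q - ℓ)) / ℓ := by
        rw [le_div_iff₀ hℓ]; linarith
      have h4 : (g q - g s) / ℓ = (g (q - ℓ) - g s) / ℓ + (g q - g (q - ℓ)) / ℓ := by ring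
      rw [h4]
      nlinarith

lemma tracking {E : Type*} [NormedAddCommGroup E] [NormedSpace ℝ E] [CompleteSpace E]
    (F : E → ℝ → E) (fbar : E → E) (K : ℝ) (hK : 0 < K)
    (hF : ∀ x t, 0 ≤ t → ‖F x t‖ ≤ K * (1 + ‖x‖))
    (hfbar : ∀ x y, ‖fbar y - fbar x‖ ≤ K * ‖y - x‖)
    (hHb : ∀ x t, 0 ≤ t → ‖F x t - fbar x‖ ≤ K * (1 + ‖x‖))
    (hHl : ∀ x y t, ‖(F y t - fbar y) - (F x t - fbar x)‖ ≤ K * ‖y - x‖)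
    (hFi : ∀ x p q, 0 ≤ p → p ≤ q → IntervalIntegrable (F x) MeasureTheory.volume p q)
    (hHint : ∀ x p q, 0 ≤ p → p ≤ q → ‖∫ r in p..q, (F x r - fbar x)‖ ≤ K * (1 + ‖x‖))
    (a g : ℝ → ℝ) (hac : Continuous a) (ha : ∀ t, 0 < a t) (had : Antitone a)
    (ha0 : Tendsto a atTop (nhds 0))
    (hg : ∀ t, HasDerivAt g (a t) t)
    (θ : ℝ → E) (hθ : ∀ t, 0 ≤ t → HasDerivAt θ (a t • F (θ t) t) t)
    (T δ : ℝ) (hT : 0 ≤ T) (hδ : 0 < δ) :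
    ∃ S : ℝ, 0 ≤ S ∧ ∀ s, S ≤ s → ∀ χ : ℝ → E, χ 0 = θ s →
      (∀ w : ℝ, 0 ≤ w → HasDerivAt χ (fbar (χ w)) w) →
      ∀ t, s ≤ t → g t - g s ≤ T → ‖θ t - χ (g t - g s)‖ ≤ δ * (1 + ‖θ s‖) := by
  have hgmono : Monotone g := by
    apply monotone_of_deriv_nonneg (fun t => (hg t).differentiableAt)
    intro t; rw [(hg t).deriv]; exact (ha t).le
  have hfc : Continuous fbar := by
    have : LipschitzWith (Real.toNNReal K) fbar := by
      apply LipschitzWith.of_dist_le_mul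
      intro x y
      rw [dist_eq_norm, dist_eq_norm, Real.coe_toNNReal _ hK.le]
      exact hfbar y x
    exact this.continuous
  have hθc : Continuous (fun r => θ (max r 0)) := by
    rw [continuous_iff_continuousAt]
    intro r
    exact ContinuousAt.comp (f := fun r : ℝ => max r 0) (g := θ)
      (hθ (max r 0) (le_max_right _ _)).continuousAt (by fun_prop)
  -- integrability
  have hbc : Continuous (fun r => a r • fbar (θ (max r 0))) :=
    hac.smul (hfc.comp hθc)
  have hbi : ∀ p q, 0 ≤ p → p ≤ q →
      IntervalIntegrable (fun r => a r • fbar (θ r)) MeasureTheory.volume p q := by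
    intro p q hp hpq
    refine (hbc.intervalIntegrable p q).congr ?_
    intro r hr
    rw [Set.uIoc_of_le hpq] at hr
    simp [max_eq_left (hp.trans hr.1.le)]
  have hdi : ∀ p q, 0 ≤ p → p ≤ q →
      IntervalIntegrable (fun r => a r • F (θ r) r) MeasureTheory.volume p q := by
    intro p q hp hpq
    have h1 : IntervalIntegrable (deriv θ) MeasureTheory.volume p q := by
      have hc : Continuous (fun r => a r * (K * (1 + ‖θ (max r 0)‖))) :=
        hac.mul (continuous_const.mul (continuous_const.add hθc.norm))
      refine (hc.intervalIntegrable p q).mono_fun (aestronglyMeasurable_deriv _ _) ?_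
      filter_upwards [MeasureTheory.ae_restrict_mem measurableSet_uIoc] with r hr
      rw [Set.uIoc_of_le hpq] at hr
      have hr0 := hp.trans hr.1.le
      rw [(hθ r hr0).deriv, norm_smul, norm_mul, max_eq_left hr0]
      gcongr
      exact (hF _ _ hr0).trans (le_abs_self _)
    refine h1.congr ?_
    intro r hr
    rw [Set.uIoc_of_le hpq] at hr
    exact (hθ r (hp.trans hr.1.le)).deriv
  have hHi : ∀ p q, 0 ≤ p → p ≤ q →
      IntervalIntegrable (fun r => a r • (F (θ r) r - fbar (θ r))) MeasureTheory.volume p q := by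
    intro p q hp hpq
    have := (hdi p q hp hpq).sub (hbi p q hp hpq)
    simpa [smul_sub] using this
  set X := Real.exp (3 * K * T) with hX
  set Y := Real.exp (2 * K * T) with hY
  have hX0 : 0 < X := Real.exp_pos _
  have hY0 : 0 < Y := Real.exp_pos _
  set C := K * Y * (1 + X) with hC
  have hC0 : 0 < C := by positivity
  set ℓ := 2 * C * T / δ + 1 with hℓdef
  have hℓ : 0 < ℓ := by positivity
  have hD : 0 < δ / (2 * C * (ℓ + 2 + K * ℓ * T)) := by positivity
  obtain ⟨S, hS⟩ := ((ha0.eventually (gt_mem_nhds hD)).and (eventually_ge_atTop 0)).exists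
  refine ⟨S, hS.2, ?_⟩
  intro s hSs χ hχ0 hχ t hst hgT
  have hs : 0 ≤ s := hS.2.trans hSs
  have has : a s ≤ δ / (2 * C * (ℓ + 2 + K * ℓ * T)) := (had hSs).trans hS.1.le
  set R := (1 + ‖θ s‖) * Y with hRdef
  have hR0 : 0 < R := by positivity
  have hR : ∀ r, s ≤ r → r ≤ t → 1 + ‖θ r‖ ≤ R := by
    intro r hr hrt
    refine (growth F K hK hF a g ha hg θ hθ s r hs hr).trans ?_
    rw [hRdef, hY]
    have := hgmono hrt
    gcongr
    linarith
  have hlip : ∀ p r, s ≤ p → p ≤ r → r ≤ t → ‖θ r - θ p‖ ≤ a s * K * R * (r - p) := by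
    intro p r hp hpr hrt
    have := Convex.norm_image_sub_le_of_norm_hasDerivWithin_le (f := θ) (s := Set.Icc p r)
      (f' := fun t => a t • F (θ t) t) (C := a s * K * R) (x := p) (y := r)
      (fun x hx => (hθ x (hs.trans (hp.trans hx.1))).hasDerivWithinAt) ?_ (convex_Icc p r)
      (Set.left_mem_Icc.2 hpr) (Set.right_mem_Icc.2 hpr)
    · rwa [Real.norm_eq_abs, abs_of_nonneg (sub_nonneg.2 hpr)] at this
    · intro x hx
      have hsx := hp.trans hx.1
      rw [norm_smul, Real.norm_eq_abs, abs_of_pos (ha x), mul_assoc]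
      have h1 := had hsx
      have h2 := hF (θ x) x (hs.trans hsx)
      have h3 := hR x hsx (hx.2.trans hrt)
      have := ha s
      gcongr
      exact h2.trans (by gcongr)
  set η := K * R * (a s + T / ℓ + a s * (ℓ + 1) + K * a s * ℓ * T) with hη
  have has0 := ha s
  have hη0 : 0 < η := by positivity
  have hE : ∀ u, s ≤ u → u ≤ t →
      ‖∫ r in s..u, a r • (F (θ r) r - fbar (θ r))‖ ≤ η := by
    intro u hsu hut
    obtain ⟨n, hn⟩ := exists_nat_ge ((u - s) / ℓ)
    rw [div_le_iff₀ hℓ] at hn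
    refine (avg_bound (fun x r => F x r - fbar x) K hK hHb hHl
      (fun x p q hp hpq => (hFi x p q hp hpq).sub (by simp)) hHint a g hac ha had hg θ hHi
      s t R ℓ hs hℓ hR hlip n u hsu hut hn).trans ?_
    rw [hη]
    have h1 : g u - g s ≤ T := by linarith [hgmono hut]
    have h2 := ha u
    gcongr
    linarith
  let y : ℝ → E := fun u => θ s + ∫ r in s..u, a r • fbar (θ (max r 0))
  have hy : ∀ u, HasDerivAt y (a u • fbar (θ (max u 0))) u := fun u =>
    ((hbc.integral_hasStrictDerivAt s u).hasDerivAt).const_add (θ s)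
  have hyθ : ∀ u, s ≤ u → u ≤ t → ‖θ u - y u‖ ≤ η := by
    intro u hsu hut
    have h1 : ∫ r in s..u, a r • fbar (θ (max r 0)) = ∫ r in s..u, a r • fbar (θ r) := by
      apply intervalIntegral.integral_congr
      intro r hr
      rw [Set.uIcc_of_le hsu] at hr
      simp [max_eq_left (hs.trans hr.1)]
    have h2 : ∫ r in s..u, a r • F (θ r) r = θ u - θ s := by
      apply intervalIntegral.integral_eq_sub_of_hasDerivAt _ (hdi s u hs hsu)
      intro r hr
      rw [Set.uIcc_of_le hsu] at hr
      exact hθ r (hs.trans hr.1)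
    have h3 : θ u - y u = ∫ r in s..u, a r • (F (θ r) r - fbar (θ r)) := by
      simp only [smul_sub]
      rw [intervalIntegral.integral_sub (hdi s u hs hsu) (hbi s u hs hsu), h2, ← h1]
      simp only [y]; abel
    rw [h3]; exact hE u hsu hut
  have hz : ∀ u, s ≤ u → HasDerivAt (fun u => y u - χ (g u - g s))
      (a u • fbar (θ (max u 0)) - a u • fbar (χ (g u - g s))) u := by
    intro u hu
    have h1 : 0 ≤ g u - g s := sub_nonneg.2 (hgmono hu)
    exact (hy u).sub (HasDerivAt.scomp u (hχ _ h1) ((hg u).sub_const (g s)))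
  have key := image_norm_le_of_norm_deriv_right_lt_deriv_boundary
    (f := fun u => y u - χ (g u - g s)) (a := s) (b := t)
    (f' := fun u => a u • fbar (θ (max u 0)) - a u • fbar (χ (g u - g s)))
    (B := fun u => η * Real.exp (3 * K * (g u - g s)))
    (B' := fun u => η * (Real.exp (3 * K * (g u - g s)) * (3 * K * a u)))
    (fun x hx => (hz x hx.1).continuousAt.continuousWithinAt)
    (fun x hx => (hz x hx.1).hasDerivWithinAt)
    (by simp [y, hχ0, hη0.le])
    (fun x => (((hg x).sub_const (g s)).const_mul (3 * K)).exp.const_mul η)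
    ?_ (Set.right_mem_Icc.2 hst)
  · have h1 := hyθ t hst le_rfl
    have h2 : ‖θ t - χ (g t - g s)‖ ≤ ‖θ t - y t‖ + ‖y t - χ (g t - g s)‖ := norm_sub_le_norm_sub_add_norm_sub _ _ _
    have h3 : η * Real.exp (3 * K * (g t - g s)) ≤ η * X := by
      rw [hX]; gcongr
    have h4 : ‖θ t - χ (g t - g s)‖ ≤ η * (1 + X) := by
      have : ‖y t - χ (g t - g s)‖ ≤ η * Real.exp (3 * K * (g t - g s)) := key
      linarith
    refine h4.trans ?_
    have h5 : η * (1 + X) = (1 + ‖θ s‖) * (C * (T / ℓ) + C * (ℓ + 2 + K * ℓ * T) * a s) := by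
      rw [hη, hRdef, hC]; ring
    have h6 : C * (ℓ + 2 + K * ℓ * T) * a s ≤ δ / 2 := by
      calc _ ≤ C * (ℓ + 2 + K * ℓ * T) * (δ / (2 * C * (ℓ + 2 + K * ℓ * T))) := by gcongr
        _ = δ / 2 := by field_simp
    have h7 : C * (T / ℓ) ≤ δ / 2 := by
      rw [← mul_div_assoc, div_le_iff₀ hℓ, hℓdef]
      have : δ / 2 * (2 * C * T / δ + 1) = C * T + δ / 2 := by field_simp
      rw [this]; linarith
    rw [h5, mul_comm δ]
    gcongr
    linarith
  · intro x hx hB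
    have hx0 : 0 ≤ x := hs.trans hx.1
    rw [max_eq_left hx0, ← smul_sub, norm_smul, Real.norm_eq_abs, abs_of_pos (ha x)]
    have h0 : 0 ≤ g x - g s := sub_nonneg.2 (hgmono hx.1)
    have h1 := hyθ x hx.1 hx.2.le
    have h2 : ‖θ x - χ (g x - g s)‖ ≤ ‖θ x - y x‖ + ‖y x - χ (g x - g s)‖ := norm_sub_le_norm_sub_add_norm_sub _ _ _
    have h3 := hfbar (χ (g x - g s)) (θ x)
    have h4 : η * 1 ≤ η * Real.exp (3 * K * (g x - g s)) := by
      gcongr; exact Real.one_le_exp (by positivity)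
    set e := η * Real.exp (3 * K * (g x - g s)) with he
    have h5 : ‖y x - χ (g x - g s)‖ = e := hB
    have h6 : ‖fbar (θ x) - fbar (χ (g x - g s))‖ ≤ K * (2 * e) :=
      h3.trans (by gcongr; linarith)
    have he0 : 0 < e := by positivity
    have h7 : 0 < a x * (K * e) := mul_pos (ha x) (mul_pos hK he0)
    calc _ ≤ a x * (K * (2 * e)) := by gcongr; exact (ha x).le
      _ < 3 * (a x * (K * e)) := by linarith
      _ = _ := by rw [he]; ring

lemma conv_core {E : Type*} [NormedAddCommGroup E] [NormedSpace ℝ E] [CompleteSpace E]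
    (fbar : E → E) (K : ℝ) (hK : 0 < K)
    (hfbar : ∀ x y, ‖fbar y - fbar x‖ ≤ K * ‖y - x‖)
    (g : ℝ → ℝ) (hgc : Continuous g) (hgm : StrictMono g) (hgt : Tendsto g atTop atTop)
    (θ : ℝ → E)
    (hgr : ∀ s t, 0 ≤ s → s ≤ t → 1 + ‖θ t‖ ≤ (1 + ‖θ s‖) * Real.exp (2 * K * (g t - g s)))
    (htr : ∀ T δ : ℝ, 0 ≤ T → 0 < δ → ∃ S : ℝ, 0 ≤ S ∧ ∀ s, S ≤ s → ∀ χ : ℝ → E, χ 0 = θ s →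
      (∀ w : ℝ, 0 ≤ w → HasDerivAt χ (fbar (χ w)) w) →
      ∀ t, s ≤ t → g t - g s ≤ T → ‖θ t - χ (g t - g s)‖ ≤ δ * (1 + ‖θ s‖))
    (θstar : E)
    (hA1 : ∀ ε : ℝ, 0 < ε → ∀ b : ℝ, ∃ τ : ℝ, ∀ χ : ℝ → E,
        (∀ w : ℝ, 0 ≤ w → HasDerivAt χ (fbar (χ w)) w) → ‖χ 0‖ ≤ b →
        ∀ v : ℝ, τ ≤ v → ‖χ v - θstar‖ ≤ ε)
    (V : E → ℝ) (hV_nonneg : ∀ x, 0 ≤ V x) (c₀ : ℝ)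
    (hA2 : ∀ χ : ℝ → E, (∀ w : ℝ, 0 ≤ w → HasDerivAt χ (fbar (χ w)) w) →
      ∀ s : ℝ, 0 ≤ s → ∀ T : ℝ, 0 ≤ T → T ≤ 1 → c₀ < ‖χ s‖ →
        V (χ (s + T)) - V (χ s) ≤ -T * ‖χ s‖)
    (hV_lip : ∀ x y, |V y - V x| ≤ K * ‖y - x‖) :
    Tendsto θ atTop (nhds θstar) := by
  have hex := ode_exists fbar K hK hfbar
  have hiv : ∀ s w, g s ≤ w → ∃ t, s ≤ t ∧ g t = w := by
    intro s w hw
    obtain ⟨t, ht, h⟩ := intermediate_value_Ici (hgc.continuousOn (s := Set.Ici s)) hgt hw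
    exact ⟨t, ht, h⟩
  obtain ⟨S, hS0, b, hb⟩ : ∃ S, 0 ≤ S ∧ ∃ b, ∀ t, S ≤ t → ‖θ t‖ ≤ b := by
    obtain ⟨S, hS0, hS⟩ := htr 1 (1 / (2 * K)) zero_le_one (by positivity)
    refine ⟨S, hS0, ?_⟩
    set c := max c₀ 1
    set B := V 0 + K * ((1 + c) * Real.exp (2 * K)) with hB
    set D := max (V (θ S)) B
    have hc1 : 1 ≤ c := le_max_right _ _
    have hP : ∀ n : ℕ, ∃ t, S ≤ t ∧ g t = g S + n ∧ V (θ t) ≤ D := by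
      intro n
      induction n with
      | zero => exact ⟨S, le_rfl, by simp, le_max_left _ _⟩
      | succ n ih =>
        obtain ⟨s, hs, hgs, hVs⟩ := ih
        obtain ⟨t, hst, hgt'⟩ := hiv s (g s + 1) (by linarith)
        refine ⟨t, hs.trans hst, by push_cast; linarith, ?_⟩
        have hg1 : g t - g s = 1 := by linarith
        rcases le_or_gt ‖θ s‖ c with h | h
        · refine le_trans ?_ (le_max_right _ _)
          have h1 := hgr s t (hS0.trans hs) hst
          rw [hg1, mul_one] at h1
          have h2 : ‖θ t‖ ≤ (1 + c) * Real.exp (2 * K) := by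
            have : (1 + ‖θ s‖) * Real.exp (2 * K) ≤ (1 + c) * Real.exp (2 * K) := by gcongr
            linarith
          have h3 := (abs_le.1 (hV_lip 0 (θ t))).2
          rw [sub_zero] at h3
          have h4 : K * ‖θ t‖ ≤ K * ((1 + c) * Real.exp (2 * K)) := by gcongr
          rw [hB]; linarith
        · refine le_trans ?_ hVs
          obtain ⟨χ, hχ0, hχ⟩ := hex (θ s)
          have h1 := hS s hs χ hχ0 hχ t hst hg1.le
          rw [hg1] at h1
          have h2 := hA2 χ hχ 0 le_rfl 1 zero_le_one le_rfl
            (by rw [hχ0]; exact lt_of_le_of_lt (le_max_left _ _) h)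
          rw [hχ0, zero_add] at h2
          have h3 := (abs_le.1 (hV_lip (χ 1) (θ t))).2
          have h4 : K * ‖θ t - χ 1‖ ≤ K * (1 / (2 * K) * (1 + ‖θ s‖)) := by gcongr
          have h5 : K * (1 / (2 * K) * (1 + ‖θ s‖)) = (1 + ‖θ s‖) / 2 := by field_simp
          linarith
    refine ⟨(1 + max c D) * Real.exp (2 * K), ?_⟩
    intro t ht
    have hgSt : 0 ≤ g t - g S := sub_nonneg.2 (hgm.monotone ht)
    obtain ⟨s, hs, hgs, hVs⟩ := hP ⌊g t - g S⌋₊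
    have hf1 := Nat.floor_le hgSt
    have hf2 := Nat.lt_floor_add_one (g t - g S)
    have hst : s ≤ t := hgm.le_iff_le.1 (by linarith)
    have h1 := hgr s t (hS0.trans hs) hst
    have h2 : ‖θ s‖ ≤ max c D := by
      rcases le_or_gt ‖θ s‖ c with h | h
      · exact h.trans (le_max_left _ _)
      · obtain ⟨χ, hχ0, hχ⟩ := hex (θ s)
        have h2 := hA2 χ hχ 0 le_rfl 1 zero_le_one le_rfl
            (by rw [hχ0]; exact lt_of_le_of_lt (le_max_left _ _) h)
        rw [hχ0, zero_add] at h2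
        have := hV_nonneg (χ 1)
        exact le_trans (by linarith) (le_max_right _ _)
    have h3 : (1 + ‖θ s‖) * Real.exp (2 * K * (g t - g s)) ≤ (1 + max c D) * Real.exp (2 * K) := by
      have : 0 < 1 + max c D := by positivity
      have h5 : g t - g s ≤ 1 := by linarith
      have h6 : 2 * K * (g t - g s) ≤ 2 * K := by nlinarith
      gcongr
    linarith
  have hb0 : 0 ≤ b := (norm_nonneg _).trans (hb S le_rfl)
  rw [Metric.tendsto_atTop]
  intro ε hε
  obtain ⟨τ, hτ⟩ := hA1 (ε / 4) (by positivity) b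
  set T := max τ 0
  obtain ⟨S', hS'0, hS'⟩ := htr T (ε / (4 * (1 + b))) (le_max_right _ _) (by positivity)
  obtain ⟨N, -, hN⟩ := hiv (max S S') (g (max S S') + T) (by linarith [le_max_right τ 0])
  refine ⟨N, fun t ht => ?_⟩
  have hgt2 : g N ≤ g t := hgm.monotone ht
  obtain ⟨s, hs, hgs⟩ := hiv (max S S') (g t - T) (by linarith)
  have hT0 : 0 ≤ T := le_max_right _ _
  have hst : s ≤ t := hgm.le_iff_le.1 (by linarith)
  obtain ⟨χ, hχ0, hχ⟩ := hex (θ s)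
  have hgT : g t - g s = T := by linarith
  have hbs := hb s ((le_max_left _ _).trans hs)
  have h1 := hS' s ((le_max_right _ _).trans hs) χ hχ0 hχ t hst hgT.le
  rw [hgT] at h1
  have h2 := hτ χ hχ (by rw [hχ0]; exact hbs) T (le_max_left _ _)
  have h3 : ε / (4 * (1 + b)) * (1 + ‖θ s‖) ≤ ε / 4 := by
    calc _ ≤ ε / (4 * (1 + b)) * (1 + b) := by gcongr
      _ = ε / 4 := by field_simp
  have h4 : ‖θ t - θstar‖ ≤ ‖θ t - χ T‖ + ‖χ T - θstar‖ :=
    norm_sub_le_norm_sub_add_norm_sub _ _ _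
  rw [dist_eq_norm]
  linarith


/-- Convergence of quasi-stochastic approximation (Theorem 1): under Assumptions
(A1)–(A5) and boundedness of `f(0,ξ(·))`, every solution of the QSA ODE
`dθ/dt = a(t) f(θ(t), ξ(t))` converges to `θ*` as `t → ∞`, for every initial
condition `θ(0)`. -/
theorem QSA_convergence
    (dd mm : ℕ)
    (f : EuclideanSpace ℝ (Fin dd) → EuclideanSpace ℝ (Fin mm) → EuclideanSpace ℝ (Fin dd))
    (ξ : ℝ → EuclideanSpace ℝ (Fin mm)) (hξ : ContinuousOn ξ (Set.Ici 0))
    (fbar : EuclideanSpace ℝ (Fin dd) → EuclideanSpace ℝ (Fin dd))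
    (hfbar : ∀ θ, Tendsto (fun T : ℝ => (1 / T) • ∫ t in (0:ℝ)..T, f θ (ξ t))
      atTop (nhds (fbar θ)))
    -- (A5): the gain process
    (a : ℝ → ℝ) (ha_pos : ∀ t : ℝ, 0 ≤ t → 0 < a t) (ha_cont : ContinuousOn a (Set.Ici 0))
    (ha_dec : ∀ s t : ℝ, 0 ≤ s → s ≤ t → a t ≤ a s)
    (ha_to0 : Tendsto a atTop (nhds 0))
    (hg_top : Tendsto (fun t : ℝ => ∫ r in (0:ℝ)..t, a r) atTop atTop)
    -- (A1): uniform global asymptotic stability of the averaged ODE at θ*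
    (θstar : EuclideanSpace ℝ (Fin dd))
    (hA1 : ∀ ε : ℝ, 0 < ε → ∀ b : ℝ, ∃ τ : ℝ,
      ∀ χ : ℝ → EuclideanSpace ℝ (Fin dd),
        (∀ w : ℝ, 0 ≤ w → HasDerivAt χ (fbar (χ w)) w) → ‖χ 0‖ ≤ b →
        ∀ v : ℝ, τ ≤ v → ‖χ v - θstar‖ ≤ ε)
    -- (A2): Lyapunov drift for the averaged flow
    (V : EuclideanSpace ℝ (Fin dd) → ℝ) (hV_cont : Continuous V)
    (hV_nonneg : ∀ x, 0 ≤ V x) (c₀ : ℝ) (hc₀ : 0 < c₀)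
    (hA2 : ∀ χ : ℝ → EuclideanSpace ℝ (Fin dd),
      (∀ w : ℝ, 0 ≤ w → HasDerivAt χ (fbar (χ w)) w) →
      ∀ s : ℝ, 0 ≤ s → ∀ T : ℝ, 0 ≤ T → T ≤ 1 → c₀ < ‖χ s‖ →
        V (χ (s + T)) - V (χ s) ≤ -T * ‖χ s‖)
    -- (A3)
    (b₀ : ℝ)
    (hA3 : ∀ θ, ∀ T : ℝ, 0 < T →
      ‖(1 / T) • (∫ t in (0:ℝ)..T, f θ (ξ t)) - fbar θ‖ ≤ (b₀ / T) * (1 + ‖θ‖))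
    -- (A4)
    (L : ℝ)
    (hV_lip : ∀ θ θ', |V θ' - V θ| ≤ L * ‖θ' - θ‖)
    (hfbar_lip : ∀ θ θ', ‖fbar θ' - fbar θ‖ ≤ L * ‖θ' - θ‖)
    (hf_lip : ∀ x θ θ', ‖f θ' x - f θ x‖ ≤ L * ‖θ' - θ‖)
    -- boundedness of f(0, ξ(·))
    (hf0 : ∃ M : ℝ, ∀ t : ℝ, 0 ≤ t → ‖f 0 (ξ t)‖ ≤ M)
    -- the QSA process
    (θ : ℝ → EuclideanSpace ℝ (Fin dd))
    (hθ : ∀ t : ℝ, 0 ≤ t → HasDerivAt θ (a t • f (θ t) (ξ t)) t) :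
    Tendsto θ atTop (nhds θstar) := by

  rcases subsingleton_or_nontrivial (EuclideanSpace ℝ (Fin dd)) with hsub | hnt
  · have : θ = fun _ => θstar := funext fun _ => Subsingleton.elim _ _
    rw [this]; exact tendsto_const_nhds
  obtain ⟨v, hv⟩ := exists_ne (0 : EuclideanSpace ℝ (Fin dd))
  have hv0 : 0 < ‖v‖ := norm_pos_iff.2 hv
  have hL : 0 ≤ L := by
    have h1 := (norm_nonneg _).trans (hfbar_lip 0 v)
    rw [sub_zero] at h1
    by_contra h
    nlinarith
  obtain ⟨M, hM⟩ := hf0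
  have hM0 : 0 ≤ M := (norm_nonneg _).trans (hM 0 le_rfl)
  have hb₀ : 0 ≤ b₀ := by
    have := (norm_nonneg _).trans (hA3 0 1 one_pos)
    simpa using this
  have hFb : ∀ x t, 0 ≤ t → ‖f x (ξ t)‖ ≤ M + L * ‖x‖ := by
    intro x t ht
    have h1 := hf_lip (ξ t) 0 x
    have h2 := hM t ht
    rw [sub_zero] at h1
    have := norm_le_norm_add_norm_sub' (f x (ξ t)) (f 0 (ξ t))
    linarith
  have hfbb : ∀ x, ‖fbar x‖ ≤ ‖fbar 0‖ + L * ‖x‖ := by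
    intro x
    have h1 := hfbar_lip 0 x
    rw [sub_zero] at h1
    have := norm_le_norm_add_norm_sub' (fbar x) (fbar 0)
    linarith
  set K := M + 2 * L + ‖fbar 0‖ + 2 * b₀ + 1 with hKdef
  have hn0 := norm_nonneg (fbar 0)
  have hK : 0 < K := by positivity
  have hLK : L ≤ K := by linarith
  -- integrability
  have hint1 : ∀ x, x ≠ θstar → ∀ T, 0 ≤ T →
      IntervalIntegrable (fun t => f x (ξ t)) MeasureTheory.volume 0 T := by
    intro x hx T hT
    by_contra hni
    apply hx
    have hz : fbar x = 0 := by
      refine tendsto_nhds_unique (hfbar x) (tendsto_const_nhds.congr' ?_)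
      filter_upwards [eventually_ge_atTop T] with T' hT'
      rw [intervalIntegral.integral_undef, smul_zero]
      intro hi
      apply hni
      refine hi.mono_set ?_
      rw [Set.uIcc_of_le hT, Set.uIcc_of_le (hT.trans hT')]
      exact Set.Icc_subset_Icc_right hT'
    have h1 : ∀ ε : ℝ, 0 < ε → ‖x - θstar‖ ≤ ε := by
      intro ε hε
      obtain ⟨τ, hτ⟩ := hA1 ε hε ‖x‖
      exact hτ (fun _ => x) (fun w _ => by rw [hz]; exact hasDerivAt_const w x) le_rfl τ le_rfl
    have h2 : ‖x - θstar‖ ≤ 0 := le_of_forall_pos_le_add (by simpa using h1)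
    exact sub_eq_zero.1 (norm_le_zero_iff.1 h2)
  have hmeas : ∀ x T, 0 ≤ T → MeasureTheory.AEStronglyMeasurable (fun t => f x (ξ t))
      (MeasureTheory.volume.restrict (Set.uIoc 0 T)) := by
    intro x T hT
    by_cases hx : x = θstar
    · refine aestronglyMeasurable_of_tendsto_ae atTop
        (f := fun (n : ℕ) t => f (x + (1 / ((n : ℝ) + 1)) • v) (ξ t)) ?_ ?_
      · intro n
        refine (hint1 _ ?_ T hT).def'.aestronglyMeasurable
        rw [hx]
        intro h
        have h1 : (1 / ((n : ℝ) + 1)) • v = 0 := by simpa using h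
        rcases smul_eq_zero.1 h1 with h2 | h2
        · have : 0 < 1 / ((n : ℝ) + 1) := by positivity
          exact this.ne' h2
        · exact hv h2
      · refine Eventually.of_forall fun t => ?_
        rw [tendsto_iff_norm_sub_tendsto_zero]
        refine squeeze_zero (fun _ => norm_nonneg _) (fun n => hf_lip (ξ t) x _) ?_
        have h1 : Tendsto (fun n : ℕ => L * ((1 / ((n : ℝ) + 1)) * ‖v‖)) atTop
            (nhds (L * (0 * ‖v‖))) :=
          ((tendsto_one_div_add_atTop_nhds_zero_nat (𝕜 := ℝ)).mul_const ‖v‖).const_mul L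
        rw [zero_mul, mul_zero] at h1
        refine h1.congr fun n => ?_
        rw [add_sub_cancel_left, norm_smul, Real.norm_eq_abs, abs_of_nonneg (by positivity)]
    · exact (hint1 x hx T hT).def'.aestronglyMeasurable
  have hint0 : ∀ x T, 0 ≤ T →
      IntervalIntegrable (fun t => f x (ξ t)) MeasureTheory.volume 0 T := by
    intro x T hT
    have hc : IntervalIntegrable (fun _ : ℝ => M + L * ‖x‖) MeasureTheory.volume 0 T := by simp
    refine hc.mono_fun (hmeas x T hT) ?_
    filter_upwards [MeasureTheory.ae_restrict_mem measurableSet_uIoc] with r hr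
    rw [Set.uIoc_of_le hT] at hr
    exact (hFb x r hr.1.le).trans (le_abs_self _)
  have hint : ∀ x p q, 0 ≤ p → p ≤ q →
      IntervalIntegrable (fun t => f x (ξ t)) MeasureTheory.volume p q :=
    fun x p q hp hpq => (hint0 x p hp).symm.trans (hint0 x q (hp.trans hpq))
  have hH0 : ∀ x T, 0 ≤ T → ‖∫ r in (0:ℝ)..T, (f x (ξ r) - fbar x)‖ ≤ b₀ * (1 + ‖x‖) := by
    intro x T hT
    rcases hT.eq_or_lt with h | h
    · rw [← h]; simp; positivity
    · have h1 := hA3 x T h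
      have h2 : ∫ r in (0:ℝ)..T, (f x (ξ r) - fbar x) =
          T • ((1 / T) • (∫ t in (0:ℝ)..T, f x (ξ t)) - fbar x) := by
        rw [intervalIntegral.integral_sub (hint0 x T hT) (by simp), smul_sub, smul_smul,
          mul_one_div_cancel h.ne', one_smul]
        simp
      rw [h2, norm_smul, Real.norm_eq_abs, abs_of_pos h]
      calc _ ≤ T * ((b₀ / T) * (1 + ‖x‖)) := by gcongr
        _ = _ := by field_simp
  -- extended gain
  let A : ℝ → ℝ := fun t => a (max t 0)
  have hAa : ∀ t, 0 ≤ t → A t = a t := fun t ht => by simp [A, max_eq_left ht]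
  have hAc : Continuous A := ha_cont.comp_continuous (by fun_prop) (fun t => le_max_right t 0)
  have hAp : ∀ t, 0 < A t := fun t => ha_pos _ (le_max_right _ _)
  have hAd : Antitone A := fun s t hst =>
    ha_dec _ _ (le_max_right _ _) (max_le_max_right 0 hst)
  have hA0 : Tendsto A atTop (nhds 0) := by
    refine ha_to0.congr' ?_
    filter_upwards [eventually_ge_atTop 0] with t ht
    exact (hAa t ht).symm
  let g : ℝ → ℝ := fun t => ∫ r in (0:ℝ)..t, A r
  have hg : ∀ t, HasDerivAt g (A t) t := fun t => (hAc.integral_hasStrictDerivAt 0 t).hasDerivAt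
  have hgt : Tendsto g atTop atTop := by
    refine hg_top.congr' ?_
    filter_upwards [eventually_ge_atTop 0] with t ht
    apply intervalIntegral.integral_congr
    intro r hr
    rw [Set.uIcc_of_le ht] at hr
    exact (hAa r hr.1).symm
  have hgm : StrictMono g := strictMono_of_deriv_pos fun t => by rw [(hg t).deriv]; exact hAp t
  have hgc : Continuous g := continuous_iff_continuousAt.2 fun t => (hg t).continuousAt
  have hθ' : ∀ t : ℝ, 0 ≤ t → HasDerivAt θ (A t • f (θ t) (ξ t)) t := by
    intro t ht; rw [hAa t ht]; exact hθ t ht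
  have hF : ∀ x t, 0 ≤ t → ‖f x (ξ t)‖ ≤ K * (1 + ‖x‖) := by
    intro x t ht
    have := hFb x t ht
    have := norm_nonneg x
    have : L * ‖x‖ ≤ K * ‖x‖ := by gcongr
    nlinarith
  have hfl : ∀ x y, ‖fbar y - fbar x‖ ≤ K * ‖y - x‖ := fun x y =>
    (hfbar_lip x y).trans (by gcongr)
  refine conv_core fbar K hK hfl g hgc hgm hgt θ
    (growth (fun x t => f x (ξ t)) K hK hF A g hAp hg θ hθ') ?_ θstar hA1 V hV_nonneg c₀ hA2
    (fun x y => (hV_lip x y).trans (by gcongr))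
  refine tracking (fun x t => f x (ξ t)) fbar K hK hF hfl ?_ ?_ hint ?_ A g hAc hAp hAd hA0 hg θ hθ'
  · intro x t ht
    have h1 := hFb x t ht
    have h2 := hfbb x
    have h3 := norm_sub_le (f x (ξ t)) (fbar x)
    have := norm_nonneg x
    have : (2 * L) * ‖x‖ ≤ K * ‖x‖ := by gcongr; linarith
    linarith
  · intro x y t
    have h1 := hf_lip (ξ t) x y
    have h2 := hfbar_lip x y
    have h3 := norm_sub_le (f y (ξ t) - f x (ξ t)) (fbar y - fbar x)
    have : (2 * L) * ‖y - x‖ ≤ K * ‖y - x‖ := by gcongr; linarith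
    rw [sub_sub_sub_comm]
    linarith
  · intro x p q hp hpq
    have e : ∫ r in p..q, (f x (ξ r) - fbar x) =
        (∫ r in (0:ℝ)..q, (f x (ξ r) - fbar x)) - ∫ r in (0:ℝ)..p, (f x (ξ r) - fbar x) := by
      rw [intervalIntegral.integral_interval_sub_left]
      · exact (hint0 x q (hp.trans hpq)).sub (by simp)
      · exact (hint0 x p hp).sub (by simp)
    rw [e]
    have h1 := hH0 x q (hp.trans hpq)
    have h2 := hH0 x p hp
    have h3 := norm_sub_le (∫ r in (0:ℝ)..q, (f x (ξ r) - fbar x))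
      (∫ r in (0:ℝ)..p, (f x (ξ r) - fbar x))
    have : (2 * b₀) * (1 + ‖x‖) ≤ K * (1 + ‖x‖) := by gcongr; linarith
    linarith
end

section
/- Ultimate boundedness of the time-scaled QSA process (Proposition 6). Suppose Assumptions (A2)–(A5) hold and sup_{t≥0} ‖f(0, ξ(t))‖ < ∞. Then there exists b < ∞ such that every time-scaled QSA process θ̂, for every initial condition θ̂(0), satisfies limsup_{u→∞} ‖θ̂(u)‖ ≤ b. -/
open intervalIntegral Filter

theorem qsa_int_exp (l t : ℝ) (hl : 0 < l) :
    ∫ s in (0:ℝ)..t, Real.exp (l * s) = (Real.exp (l * t) - 1) / l := by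
  have : ∀ x ∈ Set.uIcc 0 t, HasDerivAt (fun s => Real.exp (l * s) / l) (Real.exp (l * x)) x := by
    intro x _
    have h := (((hasDerivAt_id x).const_mul l).exp).div_const l
    have e : Real.exp (l * x) = Real.exp (l * id x) * (l * 1) / l := by
      simp only [id]; field_simp
    rw [e]
    exact h
  rw [integral_eq_sub_of_hasDerivAt this (Continuous.intervalIntegrable (by fun_prop) _ _)]
  simp
  ring

theorem qsa_global_ode {E : Type*} [NormedAddCommGroup E] [NormedSpace ℝ E] [CompleteSpace E]
    (F : E → E) (L : ℝ) (hL : 0 ≤ L) (hF : ∀ x y, ‖F y - F x‖ ≤ L * ‖y - x‖) (x0 : E) :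
    ∃ χ : ℝ → E, χ 0 = x0 ∧ ∀ w : ℝ, 0 ≤ w → HasDerivAt χ (F (χ w)) w := by
  have hFc : Continuous F := by
    have : LipschitzWith L.toNNReal F := LipschitzWith.of_dist_le_mul (by
      intro x y
      rw [dist_eq_norm, dist_eq_norm, Real.coe_toNNReal _ hL]
      exact hF y x)
    exact this.continuous
  set l : ℝ := 2 * L + 1 with hl
  have hlpos : 0 < l := by positivity
  let P : (BoundedContinuousFunction ℝ E) → ℝ → E := fun y t =>
    Real.exp (-(l * |t|)) • (x0 + ∫ s in (0:ℝ)..|t|, F (Real.exp (l * s) • y s))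
  have hcont0 : ∀ y : BoundedContinuousFunction ℝ E,
      Continuous (fun s => F (Real.exp (l * s) • y s)) := by
    intro y
    have := y.continuous
    fun_prop
  have hPc : ∀ y, Continuous (P y) := by
    intro y
    have h1 : Continuous (fun t => ∫ s in (0:ℝ)..t, F (Real.exp (l * s) • y s)) :=
      intervalIntegral.continuous_primitive (fun a b => (hcont0 y).intervalIntegrable a b) 0
    have h2 := h1.comp continuous_abs
    simp only [P]
    exact Continuous.smul (by fun_prop) (continuous_const.add h2)
  have key : ∀ (c t : ℝ), 0 ≤ c → ∀ h : ℝ → E, (∀ s, 0 ≤ s → ‖h s‖ ≤ c * Real.exp (l * s)) →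
      Real.exp (-(l * |t|)) * ‖∫ s in (0:ℝ)..|t|, h s‖ ≤ c / l := by
    intro c t hc h hh
    have h1 : ‖∫ s in (0:ℝ)..|t|, h s‖ ≤ ∫ s in (0:ℝ)..|t|, c * Real.exp (l * s) := by
      apply intervalIntegral.norm_integral_le_of_norm_le (abs_nonneg t)
      · exact Eventually.of_forall (fun s hs => hh s hs.1.le)
      · exact Continuous.intervalIntegrable (by fun_prop) _ _
    rw [intervalIntegral.integral_const_mul, qsa_int_exp l _ hlpos] at h1
    have h3 : c * ((Real.exp (l * |t|) - 1) / l) ≤ c / l * Real.exp (l * |t|) := by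
      rw [div_mul_eq_mul_div, mul_div_assoc']
      gcongr
      linarith
    calc _ ≤ Real.exp (-(l * |t|)) * (c / l * Real.exp (l * |t|)) := by gcongr; linarith
      _ = c / l := by rw [Real.exp_neg]; field_simp
  have hPb : ∀ y, ∀ t, ‖P y t‖ ≤ ‖x0‖ + (‖F 0‖ + L * ‖y‖) / l := by
    intro y t
    have h1 := key (‖F 0‖ + L * ‖y‖) t (by positivity) (fun s => F (Real.exp (l * s) • y s)) (by
      intro s hs
      have h2 := hF 0 (Real.exp (l * s) • y s)
      have h3 : ‖F (Real.exp (l * s) • y s)‖ ≤ ‖F 0‖ + ‖F (Real.exp (l * s) • y s) - F 0‖ :=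
        norm_le_norm_add_norm_sub' _ _
      rw [sub_zero, norm_smul, Real.norm_of_nonneg (Real.exp_pos _).le] at h2
      have h4 := y.norm_coe_le_norm s
      have h5 : 1 ≤ Real.exp (l * s) := Real.one_le_exp (by positivity)
      have h6 : L * (Real.exp (l * s) * ‖y s‖) ≤ L * (Real.exp (l * s) * ‖y‖) := by gcongr
      have h7 := mul_le_mul_of_nonneg_left h5 (norm_nonneg (F 0))
      linarith)
    simp only [P]
    rw [smul_add]
    refine (norm_add_le _ _).trans ?_
    rw [norm_smul, norm_smul, Real.norm_of_nonneg (Real.exp_pos _).le]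
    have h8 : Real.exp (-(l * |t|)) ≤ 1 := Real.exp_le_one_iff.2 (by
      have := mul_nonneg hlpos.le (abs_nonneg t); linarith)
    have h9 := mul_le_mul_of_nonneg_right h8 (norm_nonneg x0)
    linarith
  let Φ : BoundedContinuousFunction ℝ E → BoundedContinuousFunction ℝ E := fun y =>
    BoundedContinuousFunction.ofNormedAddCommGroup (P y) (hPc y) _ (hPb y)
  have hΦ : ContractingWith (1/2) Φ := by
    refine ⟨by norm_num, LipschitzWith.of_dist_le_mul ?_⟩
    intro y z
    rw [BoundedContinuousFunction.dist_le (by positivity)]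
    intro t
    have h1 := key (L * dist y z) t (by positivity)
      (fun s => F (Real.exp (l * s) • y s) - F (Real.exp (l * s) • z s)) (by
      intro s hs
      refine (hF _ _).trans ?_
      rw [← smul_sub, norm_smul, Real.norm_of_nonneg (Real.exp_pos _).le, ← dist_eq_norm]
      have := BoundedContinuousFunction.dist_coe_le_dist (f := y) (g := z) s
      calc L * (Real.exp (l * s) * dist (y s) (z s))
          ≤ L * (Real.exp (l * s) * dist y z) := by gcongr
        _ = _ := by ring)
    rw [intervalIntegral.integral_sub ((hcont0 y).intervalIntegrable _ _)
      ((hcont0 z).intervalIntegrable _ _)] at h1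
    have h2 : dist (Φ y t) (Φ z t) = Real.exp (-(l * |t|)) *
        ‖(∫ s in (0:ℝ)..|t|, F (Real.exp (l * s) • y s))
          - ∫ s in (0:ℝ)..|t|, F (Real.exp (l * s) • z s)‖ := by
      change dist (P y t) (P z t) = _
      rw [dist_eq_norm]
      simp only [P]
      rw [← smul_sub, norm_smul, Real.norm_of_nonneg (Real.exp_pos _).le, add_sub_add_left_eq_sub]
    rw [h2]
    refine h1.trans ?_
    rw [div_le_iff₀ hlpos]
    have := @dist_nonneg _ _ y z
    push_cast
    rw [hl]
    nlinarith
  obtain ⟨y, hy⟩ : ∃ y, Φ y = y := ⟨_, hΦ.fixedPoint_isFixedPt⟩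
  have hy' : ∀ t, 0 ≤ t → Real.exp (l * t) • y t =
      x0 + ∫ s in (0:ℝ)..t, F (Real.exp (l * s) • y s) := by
    intro t ht
    have h : y t = P y t := by
      conv_lhs => rw [← hy]
      rfl
    rw [h]
    simp only [P]
    rw [abs_of_nonneg ht, smul_smul, ← Real.exp_add]
    simp
  refine ⟨fun t => x0 + ∫ s in (0:ℝ)..t, F (Real.exp (l * s) • y s), by simp, ?_⟩
  intro w hw
  have h := ((hcont0 y).integral_hasStrictDerivAt 0 w).hasDerivAt.const_add x0
  rw [hy' w hw] at h
  exact h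

/-- linear growth -/
theorem qsa_growth {E : Type*} [NormedAddCommGroup E] [NormedSpace ℝ E]
    (y y' : ℝ → E) (u0 K : ℝ) (hK : 1 ≤ K) (hy : ∀ u, u0 ≤ u → HasDerivAt y (y' u) u)
    (hb : ∀ u, u0 ≤ u → ‖y' u‖ ≤ K * (1 + ‖y u‖)) :
    ∀ u ∈ Set.Icc u0 (u0 + 1), ‖y u - y u0‖ ≤ K * Real.exp K * (1 + ‖y u0‖) * (u - u0) := by
  intro u hu
  have h := norm_le_gronwallBound_of_norm_deriv_right_le (f := fun u => y u - y u0) (f' := y')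
    (δ := 0) (K := K) (ε := K * (1 + ‖y u0‖)) (a := u0) (b := u0 + 1)
    (fun x hx => ((hy x hx.1).continuousAt.sub continuousAt_const).continuousWithinAt)
    (fun x hx => ((hy x hx.1).sub_const _).hasDerivWithinAt) (by simp) (by
      intro x hx
      have h1 := hb x hx.1
      have h2 : ‖y x‖ ≤ ‖y u0‖ + ‖y x - y u0‖ := norm_le_norm_add_norm_sub' _ _
      nlinarith) u hu
  refine h.trans ?_
  rw [gronwallBound_of_K_ne_0 (by positivity)]
  have hx0 : 0 ≤ u - u0 := by linarith [hu.1]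
  have hx1 : u - u0 ≤ 1 := by linarith [hu.2]
  generalize u - u0 = x at hx0 hx1
  have h1 : Real.exp (K * x) - 1 ≤ K * x * Real.exp K := by
    have h2 : 1 - K * x ≤ Real.exp (-(K * x)) := by
      have := Real.add_one_le_exp (-(K * x)); linarith
    have h3 : Real.exp (K * x) * Real.exp (-(K * x)) = 1 := by rw [← Real.exp_add]; simp
    have h4 : Real.exp (K * x) ≤ Real.exp K := Real.exp_le_exp.2 (by nlinarith)
    have h5 := Real.exp_pos (K * x)
    have h6 : K * x * Real.exp (K * x) ≤ K * x * Real.exp K := by gcongr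
    nlinarith
  have h7 : K * (1 + ‖y u0‖) / K = 1 + ‖y u0‖ := by field_simp
  rw [h7]
  have h8 : 0 ≤ 1 + ‖y u0‖ := by positivity
  nlinarith

/-- Abel summation bound -/
theorem qsa_abel {E : Type*} [NormedAddCommGroup E] [NormedSpace ℝ E] [CompleteSpace E]
    (a : ℝ → ℝ) (ha_pos : ∀ t : ℝ, 0 ≤ t → 0 < a t) (ha_cont : ContinuousOn a (Set.Ici 0))
    (ha_dec : ∀ s t : ℝ, 0 ≤ s → s ≤ t → a t ≤ a s)
    (h : ℝ → E) (hint : ∀ s t : ℝ, 0 ≤ s → 0 ≤ t → IntervalIntegrable h MeasureTheory.volume s t)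
    (H B t1 : ℝ) (hH : ∀ t, 0 ≤ t → ‖h t‖ ≤ H)
    (hB : ∀ s t, 0 ≤ s → s ≤ t → ‖∫ r in s..t, h r‖ ≤ B) :
    ∀ s, 0 ≤ s → s ≤ t1 → ‖∫ r in s..t1, a r • h r‖ ≤ a s * (H + 2 * B) := by
  have hH0 : 0 ≤ H := (norm_nonneg _).trans (hH 0 le_rfl)
  have hB0 : 0 ≤ B := (norm_nonneg _).trans (hB 0 0 le_rfl le_rfl)
  have haint : ∀ s t : ℝ, 0 ≤ s → 0 ≤ t →
      IntervalIntegrable (fun r => a r • h r) MeasureTheory.volume s t := by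
    intro s t hs ht
    exact (hint s t hs ht).continuousOn_smul
      (ha_cont.mono (fun x hx => (le_min hs ht).trans hx.1))
  have step : ∀ s t, 0 ≤ s → s ≤ t → t ≤ s + 1 →
      ‖(∫ r in s..t, a r • h r) - a s • ∫ r in s..t, h r‖ ≤ (a s - a t) * H := by
    intro s t hs hst ht
    rw [← intervalIntegral.integral_smul, ← intervalIntegral.integral_sub (haint s t hs (hs.trans hst))
      (show IntervalIntegrable (fun r => a s • h r) MeasureTheory.volume s t from
        (hint s t hs (hs.trans hst)).smul (a s))]
    have := intervalIntegral.norm_integral_le_of_norm_le_const (a := s) (b := t)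
      (f := fun r => a r • h r - a s • h r) (C := (a s - a t) * H) (by
        intro r hr
        rw [Set.uIoc_of_le hst] at hr
        rw [← sub_smul, norm_smul]
        have h1 := ha_dec s r hs hr.1.le
        have h2 := ha_dec r t (hs.trans hr.1.le) hr.2
        rw [Real.norm_of_nonpos (by linarith)]
        exact mul_le_mul (by linarith) (hH r (hs.trans hr.1.le)) (norm_nonneg _) (by linarith))
    refine this.trans ?_
    rw [abs_of_nonneg (by linarith)]
    have h3 : 0 ≤ (a s - a t) * H := mul_nonneg (by linarith [ha_dec s t hs hst]) hH0
    nlinarith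
  have main : ∀ n : ℕ, ∀ s, 0 ≤ s → s ≤ t1 → t1 ≤ s + n →
      ‖(∫ r in s..t1, a r • h r) - a s • ∫ r in s..t1, h r‖ ≤ (a s - a t1) * (H + B) := by
    intro n
    induction n with
    | zero =>
      intro s hs h1 h2
      have : s = t1 := by push_cast at h2; linarith
      subst this
      simp
    | succ n ih =>
      intro s hs h1 h2
      push_cast at h2
      by_cases hc : t1 ≤ s + 1
      · refine (step s t1 hs h1 hc).trans ?_
        have := ha_dec s t1 hs h1
        exact mul_le_mul_of_nonneg_left (by linarith) (by linarith)
      · push Not at hc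
        have i1 := ih (s + 1) (by linarith) hc.le (by linarith)
        have i2 := step s (s + 1) hs (by linarith) le_rfl
        have i3 := hB (s + 1) t1 (by linarith) hc.le
        have e1 := intervalIntegral.integral_add_adjacent_intervals (haint s (s+1) hs (by linarith))
          (haint (s+1) t1 (by linarith) (by linarith))
        have e2 := intervalIntegral.integral_add_adjacent_intervals (hint s (s+1) hs (by linarith))
          (hint (s+1) t1 (by linarith) (by linarith))
        have e3 : (∫ r in s..t1, a r • h r) - a s • ∫ r in s..t1, h r =
            ((∫ r in (s+1)..t1, a r • h r) - a (s+1) • ∫ r in (s+1)..t1, h r) +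
            ((∫ r in s..(s+1), a r • h r) - a s • ∫ r in s..(s+1), h r) +
            (a (s+1) - a s) • ∫ r in (s+1)..t1, h r := by
          rw [← e1, ← e2]
          module
        rw [e3]
        have d1 := ha_dec s (s+1) hs (by linarith)
        have i4 : ‖(a (s+1) - a s) • ∫ r in (s+1)..t1, h r‖ ≤ (a s - a (s+1)) * B := by
          rw [norm_smul, Real.norm_of_nonpos (by linarith)]
          exact mul_le_mul (by linarith) i3 (norm_nonneg _) (by linarith)
        refine (norm_add₃_le).trans ?_
        nlinarith
  intro s hs hst
  obtain ⟨n, hn⟩ := exists_nat_ge (t1 - s)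
  have m := main n s hs hst (by linarith)
  have e : (∫ r in s..t1, a r • h r) = ((∫ r in s..t1, a r • h r) - a s • ∫ r in s..t1, h r) +
    a s • ∫ r in s..t1, h r := by abel
  rw [e]
  refine (norm_add_le _ _).trans ?_
  have p := ha_pos s hs
  have p1 := ha_pos t1 (hs.trans hst)
  have p2 : ‖a s • ∫ r in s..t1, h r‖ ≤ a s * B := by
    rw [norm_smul, Real.norm_of_nonneg p.le]
    exact mul_le_mul_of_nonneg_left (hB s t1 hs hst) p.le
  nlinarith [mul_nonneg p1.le (add_nonneg hH0 hB0)]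

/-- skeleton argument -/
theorem qsa_skeleton {E : Type*} [NormedAddCommGroup E]
    (V : E → ℝ) (hV0 : ∀ x, 0 ≤ V x) (K C T c us : ℝ) (hK : 1 ≤ K) (hC : 0 ≤ C) (hT : 0 < T)
    (hT1 : T ≤ 1) (hc : 1 ≤ c) (hV : ∀ x, V x ≤ V 0 + K * ‖x‖) (y : ℝ → E)
    (hgr : ∀ u, us ≤ u → ∀ s, 0 ≤ s → s ≤ 1 → ‖y (u + s)‖ ≤ ‖y u‖ + C * (1 + ‖y u‖))
    (hdr : ∀ u, us ≤ u → c < ‖y u‖ → V (y (u + T)) ≤ V (y u) - T / 2 * ‖y u‖) :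
    ∃ u₁ : ℝ, ∀ u : ℝ, u₁ ≤ u →
      ‖y u‖ ≤ (c + 2 * (V 0 + K * (c + C * (1 + c))) / T) +
        C * (1 + (c + 2 * (V 0 + K * (c + C * (1 + c))) / T)) := by
  set v := V 0 + K * (c + C * (1 + c)) with hv
  have hv0 : 0 ≤ v := by have := hV0 0; positivity
  have small : ∀ x : E, ‖x‖ ≤ c → V x ≤ v := by
    intro x hx
    have h1 := hV x
    have h2 : K * ‖x‖ ≤ K * (c + C * (1 + c)) := by
      have : 0 ≤ C * (1 + c) := by positivity
      gcongr
      linarith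
    linarith
  have hus : ∀ n : ℕ, us ≤ us + n * T := by
    intro n
    have : 0 ≤ (n:ℝ) * T := by positivity
    linarith
  have hsucc : ∀ n : ℕ, us + ((n + 1 : ℕ) : ℝ) * T = us + n * T + T := by
    intro n; push_cast; ring
  have inv : ∀ u, us ≤ u → V (y u) ≤ v → V (y (u + T)) ≤ v := by
    intro u hu h
    by_cases hcu : c < ‖y u‖
    · have h1 := hdr u hu hcu
      have h2 : 0 ≤ T / 2 * ‖y u‖ := by positivity
      linarith
    · push Not at hcu
      have h1 := hgr u hu T hT.le hT1
      have h2 := hV (y (u + T))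
      have h3 : K * ‖y (u + T)‖ ≤ K * (c + C * (1 + c)) := by
        refine mul_le_mul_of_nonneg_left (h1.trans ?_) (by linarith)
        gcongr
      linarith
  obtain ⟨n0, hn0⟩ : ∃ n0 : ℕ, V (y (us + n0 * T)) ≤ v := by
    by_contra hcon
    push Not at hcon
    have hbig : ∀ n : ℕ, c < ‖y (us + n * T)‖ := by
      intro n
      by_contra h
      push Not at h
      linarith [small _ h, hcon n]
    have hdec : ∀ n : ℕ, V (y (us + n * T)) ≤ V (y us) - n * (T / 2) := by
      intro n
      induction n with
      | zero => simp
      | succ n ih =>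
        rw [hsucc]
        have h1 := hdr _ (hus n) (hbig n)
        have h2 : T / 2 * 1 ≤ T / 2 * ‖y (us + n * T)‖ := by
          have := hbig n
          gcongr
          linarith
        push_cast
        linarith
    obtain ⟨n, hn⟩ := exists_nat_gt (V (y us) / (T / 2))
    rw [div_lt_iff₀ (by positivity)] at hn
    linarith [hdec n, hV0 (y (us + n * T))]
  have hall : ∀ n : ℕ, n0 ≤ n → V (y (us + n * T)) ≤ v := by
    intro n hn
    induction n, hn using Nat.le_induction with
    | base => exact hn0
    | succ n hn ih =>
      rw [hsucc]
      exact inv _ (hus n) ih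
  have hR : ∀ n : ℕ, n0 ≤ n → ‖y (us + n * T)‖ ≤ c + 2 * v / T := by
    intro n hn
    by_cases hcu : c < ‖y (us + n * T)‖
    · have h1 := hdr _ (hus n) hcu
      have h2 := hV0 (y (us + n * T + T))
      have h3 := hall n hn
      have h4 : ‖y (us + n * T)‖ ≤ 2 * v / T := by
        rw [le_div_iff₀ hT]
        linarith
      linarith
    · push Not at hcu
      have : 0 ≤ 2 * v / T := by positivity
      linarith
  refine ⟨us + n0 * T, fun u hu => ?_⟩
  have hq0 : 0 ≤ (u - us) / T := div_nonneg (by linarith [hus n0]) hT.le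
  set n := ⌊(u - us) / T⌋₊ with hn
  have hn1 : (n:ℝ) ≤ (u - us) / T := Nat.floor_le hq0
  have hn2 : (u - us) / T < n + 1 := Nat.lt_floor_add_one _
  have hn3 : n0 ≤ n := Nat.le_floor (by rw [le_div_iff₀ hT]; linarith)
  rw [le_div_iff₀ hT] at hn1
  rw [div_lt_iff₀ hT] at hn2
  have h1 := hgr (us + n * T) (hus n) (u - us - n * T) (by linarith) (by linarith)
  have e : us + n * T + (u - us - n * T) = u := by ring
  rw [e] at h1
  have h2 := hR n hn3
  refine h1.trans ?_
  gcongr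

/-- one-window estimate for the averaged flow -/
theorem qsa_chi {E : Type*} [NormedAddCommGroup E] [NormedSpace ℝ E]
    (F : E → E) (K C T : ℝ) (hK : 1 ≤ K) (hC : C = K * Real.exp K) (hT : 0 < T) (hT1 : T ≤ 1)
    (hF : ∀ x y, ‖F y - F x‖ ≤ K * ‖y - x‖) (hFb : ∀ x, ‖F x‖ ≤ K * (1 + ‖x‖))
    (χ : ℝ → E) (x0 : E) (h0 : χ 0 = x0)
    (hχ : ∀ w : ℝ, 0 ≤ w → HasDerivAt χ (F (χ w)) w) :
    ‖χ T - x0 - T • F x0‖ ≤ K * C * (1 + ‖x0‖) * T * T := by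
  have hC0 : 0 ≤ C := by rw [hC]; positivity
  have gr := qsa_growth χ (fun w => F (χ w)) 0 K hK hχ (fun u _ => hFb _)
  have h := norm_image_sub_le_of_norm_deriv_le_segment' (f := fun w => χ w - w • F x0)
    (f' := fun w => F (χ w) - F x0) (C := K * C * (1 + ‖x0‖) * T) (a := 0) (b := T)
    (by
      intro w hw
      have h1 := (hχ w hw.1).sub ((hasDerivAt_id w).smul_const (F x0))
      simp only [one_smul] at h1
      exact h1.hasDerivWithinAt)
    (by
      intro w hw
      refine (hF _ _).trans ?_
      have h2 := gr w ⟨hw.1, by linarith [hw.2]⟩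
      rw [h0, ← hC, sub_zero] at h2
      have h3 : C * (1 + ‖x0‖) * w ≤ C * (1 + ‖x0‖) * T := by
        have := hw.2.le
        gcongr
      calc _ ≤ K * (C * (1 + ‖x0‖) * T) := by gcongr; linarith
        _ = _ := by ring) T ⟨hT.le, le_rfl⟩
  simp only [h0, zero_smul, sub_zero] at h
  convert h using 2
  abel

/-- one-window estimate for the QSA process -/
theorem qsa_window {E X : Type*} [NormedAddCommGroup E] [NormedSpace ℝ E] [CompleteSpace E]
    (f : E → X → E) (ξ : ℝ → X) (x0 fb : E)
    (a : ℝ → ℝ) (ha_pos : ∀ t : ℝ, 0 ≤ t → 0 < a t) (ha_cont : ContinuousOn a (Set.Ici 0))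
    (ha_dec : ∀ s t : ℝ, 0 ≤ s → s ≤ t → a t ≤ a s)
    (g : ℝ → ℝ) (hg : ∀ t, g t = ∫ r in (0:ℝ)..t, a r)
    (ginv : ℝ → ℝ) (hginv' : ∀ t : ℝ, 0 ≤ t → ginv (g t) = t)
    (b₀ K C T t0 t1 : ℝ) (hK : 1 ≤ K) (hC : C = K * Real.exp K) (hT : 0 < T) (hT1 : T ≤ 1)
    (hA3 : ∀ T : ℝ, 0 < T → ‖(∫ t in (0:ℝ)..T, f x0 (ξ t)) - T • fb‖ ≤ b₀ * (1 + ‖x0‖))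
    (hint : ∀ s t : ℝ, 0 ≤ s → 0 ≤ t →
      IntervalIntegrable (fun t => f x0 (ξ t)) MeasureTheory.volume s t)
    (hf : ∀ x θ θ', ‖f θ' x - f θ x‖ ≤ K * ‖θ' - θ‖)
    (hfb : ∀ θ t, 0 ≤ t → ‖f θ (ξ t)‖ ≤ K * (1 + ‖θ‖))
    (hfb' : ‖fb‖ ≤ K * (1 + ‖x0‖))
    (y : ℝ → E) (ht0 : 0 < t0) (ht1 : t0 ≤ t1) (hgt : g t1 = g t0 + T)
    (hgmono : ∀ s t, 0 ≤ s → s ≤ t → g s ≤ g t)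
    (hx0 : y (g t0) = x0)
    (hginv : ∀ u : ℝ, 0 ≤ u → 0 ≤ ginv u)
    (hy : ∀ u : ℝ, 0 ≤ u → HasDerivAt y (f (y u) (ξ (ginv u))) u) :
    ‖y (g t0 + T) - x0 - T • fb‖ ≤ 
      K * C * (1 + ‖x0‖) * T * T + a t0 * ((2 * K + 4 * b₀) * (1 + ‖x0‖)) := by
  have hC0 : 0 ≤ C := by rw [hC]; positivity
  have hg0 : g 0 = 0 := by rw [hg]; simp
  have hgt0 : 0 ≤ g t0 := by rw [← hg0]; exact hgmono 0 t0 le_rfl ht0.le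
  have aint : ∀ s t : ℝ, 0 ≤ s → 0 ≤ t → IntervalIntegrable a MeasureTheory.volume s t := by
    intro s t hs ht
    exact (ha_cont.mono (fun x hx => (le_min hs ht).trans hx.1)).intervalIntegrable
  have inta : ∫ r in t0..t1, a r = T := by
    have := intervalIntegral.integral_interval_sub_left (aint 0 t1 le_rfl (by linarith))
      (aint 0 t0 le_rfl ht0.le)
    rw [← this, ← hg, ← hg, hgt]; ring
  have gr : ∀ t, t0 ≤ t → t ≤ t1 → ‖y (g t) - x0‖ ≤ C * (1 + ‖x0‖) * T := by
    intro t h1 h2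
    have k1 := hgmono t0 t ht0.le h1
    have k2 := hgmono t t1 (by linarith) h2
    have h := qsa_growth y (fun u => f (y u) (ξ (ginv u))) (g t0) K hK
      (fun u hu => hy u (by linarith)) (fun u hu => hfb _ _ (hginv u (by linarith)))
      (g t) ⟨k1, by linarith⟩
    rw [hx0, ← hC] at h
    refine h.trans ?_
    gcongr
    linarith
  have hgd : ∀ t, 0 < t → HasDerivAt g (a t) t := by
    intro t ht
    have e : g = fun t => ∫ r in (0:ℝ)..t, a r := funext hg
    rw [e]
    have hc : ContinuousOn a (Set.Ioi 0) := ha_cont.mono Set.Ioi_subset_Ici_self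
    exact intervalIntegral.integral_hasDerivAt_right (aint 0 t le_rfl ht.le)
      (hc.stronglyMeasurableAtFilter isOpen_Ioi t ht) (hc.continuousAt (Ioi_mem_nhds ht))
  let φ : ℝ → E := fun t => a t • f (y (g t)) (ξ t)
  have hΘ : ∀ t, t0 ≤ t → HasDerivAt (fun t => y (g t)) (φ t) t := by
    intro t ht
    have h1 := hy (g t) (hgt0.trans (hgmono t0 t ht0.le ht))
    rw [hginv' t (by linarith)] at h1
    exact HasDerivAt.scomp t h1 (hgd t (by linarith))
  have hφb : ∀ t, t0 ≤ t → t ≤ t1 → ‖φ t‖ ≤ a t0 * (K * (1 + (‖x0‖ + C * (1 + ‖x0‖) * T))) := by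
    intro t h1 h2
    simp only [φ]
    rw [norm_smul, Real.norm_of_nonneg (ha_pos t (by linarith)).le]
    have k1 := gr t h1 h2
    have k2 : ‖y (g t)‖ ≤ ‖x0‖ + ‖y (g t) - x0‖ := norm_le_norm_add_norm_sub' _ _
    refine mul_le_mul (ha_dec t0 t ht0.le h1) ((hfb _ t (by linarith)).trans ?_) (norm_nonneg _)
      (ha_pos t0 ht0.le).le
    gcongr
    linarith
  have hφi : IntervalIntegrable φ MeasureTheory.volume t0 t1 := by
    rw [intervalIntegrable_iff_integrableOn_Ioc_of_le ht1]
    have h1 : MeasureTheory.IntegrableOn (deriv (fun t => y (g t))) (Set.Ioc t0 t1) := by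
      refine MeasureTheory.Measure.integrableOn_of_bounded (by simp)
        (stronglyMeasurable_deriv _).aestronglyMeasurable
        (M := a t0 * (K * (1 + (‖x0‖ + C * (1 + ‖x0‖) * T)))) ?_
      refine (MeasureTheory.ae_restrict_iff' measurableSet_Ioc).2 (Eventually.of_forall ?_)
      intro t ht
      rw [(hΘ t ht.1.le).deriv]
      exact hφb t ht.1.le ht.2
    exact h1.congr_fun (fun t ht => (hΘ t ht.1.le).deriv) measurableSet_Ioc
  have ftc : ∫ t in t0..t1, φ t = y (g t0 + T) - x0 := by
    rw [intervalIntegral.integral_eq_sub_of_hasDerivAt (f := fun t => y (g t)) (f' := φ) ?_ hφi]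
    · simp only [hgt, hx0]
    · intro t ht
      rw [Set.uIcc_of_le ht1] at ht
      exact hΘ t ht.1
  have hint' : ∀ s t : ℝ, 0 ≤ s → 0 ≤ t →
      IntervalIntegrable (fun t => f x0 (ξ t) - fb) MeasureTheory.volume s t := by
    intro s t hs ht
    exact (hint s t hs ht).sub intervalIntegrable_const
  have hb1 : 0 ≤ b₀ * (1 + ‖x0‖) := (norm_nonneg _).trans (hA3 1 one_pos)
  have hpr : ∀ t, 0 ≤ t → ‖∫ r in (0:ℝ)..t, (f x0 (ξ r) - fb)‖ ≤ b₀ * (1 + ‖x0‖) := by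
    intro t ht
    rcases ht.eq_or_lt with rfl | ht
    · simpa using hb1
    · rw [intervalIntegral.integral_sub (hint 0 t le_rfl ht.le) intervalIntegrable_const,
        intervalIntegral.integral_const, sub_zero]
      exact hA3 t ht
  have abel := qsa_abel a ha_pos ha_cont ha_dec (fun t => f x0 (ξ t) - fb) hint'
    (2 * K * (1 + ‖x0‖)) (2 * (b₀ * (1 + ‖x0‖))) t1
    (by
      intro t ht
      refine (norm_sub_le _ _).trans ?_
      linarith [hfb x0 t ht])
    (by
      intro s t hs hst
      have := intervalIntegral.integral_interval_sub_left (hint' 0 t le_rfl (hs.trans hst))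
        (hint' 0 s le_rfl hs)
      rw [← this]
      refine (norm_sub_le _ _).trans ?_
      linarith [hpr s hs, hpr t (hs.trans hst)]) t0 ht0.le ht1
  have ht1' : 0 ≤ t1 := by linarith
  have hcI : ContinuousOn a (Set.uIcc t0 t1) :=
    ha_cont.mono (fun x hx => (le_min ht0.le ht1').trans hx.1)
  have aint1 : IntervalIntegrable (fun t => a t • fb) MeasureTheory.volume t0 t1 :=
    (intervalIntegrable_const (c := fb)).continuousOn_smul hcI
  have aint2 : IntervalIntegrable (fun t => a t • (f x0 (ξ t) - fb)) MeasureTheory.volume t0 t1 :=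
    (hint' t0 t1 ht0.le ht1').continuousOn_smul hcI
  have e1 : ∫ t in t0..t1, a t • fb = T • fb := by
    rw [intervalIntegral.integral_smul_const, inta]
  have e2 : y (g t0 + T) - x0 - T • fb = (∫ t in t0..t1, (φ t - a t • f x0 (ξ t)))
      + ∫ t in t0..t1, a t • (f x0 (ξ t) - fb) := by
    rw [← ftc, ← e1, ← intervalIntegral.integral_sub hφi aint1,
      ← intervalIntegral.integral_add
        (hφi.sub ((hint t0 t1 ht0.le ht1').continuousOn_smul hcI)) aint2]
    congr 1
    funext t
    rw [smul_sub]
    abel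
  have e3 : ‖∫ t in t0..t1, (φ t - a t • f x0 (ξ t))‖ ≤ K * C * (1 + ‖x0‖) * T * T := by
    have h := intervalIntegral.norm_integral_le_of_norm_le (a := t0) (b := t1) ht1
      (f := fun t => φ t - a t • f x0 (ξ t)) (g := fun t => K * C * (1 + ‖x0‖) * T * a t)
      (Eventually.of_forall (by
        intro t ht
        have hat := ha_pos t (by linarith [ht.1])
        simp only [φ]
        rw [← smul_sub, norm_smul, Real.norm_of_nonneg hat.le, mul_comm]
        refine mul_le_mul_of_nonneg_right ((hf _ _ _).trans ?_) hat.le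
        calc K * ‖y (g t) - x0‖ ≤ K * (C * (1 + ‖x0‖) * T) := by
              gcongr
              exact gr t ht.1.le ht.2
          _ = _ := by ring))
      ((aint t0 t1 ht0.le ht1').const_mul _)
    rwa [intervalIntegral.integral_const_mul, inta] at h
  rw [e2]
  refine (norm_add_le _ _).trans (add_le_add e3 (abel.trans (le_of_eq ?_)))
  ring

/-- Ultimate boundedness of the time-scaled QSA process (Proposition 6): under
(A2)–(A5) and boundedness of `f(0,ξ(·))`, there is `b < ∞` such that every time-scaled
QSA process satisfies `limsup_{u→∞} ‖θ̂(u)‖ ≤ b`, for every initial condition. -/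
theorem ultimate_boundedness_time_scaled_QSA
    (dd mm : ℕ)
    (f : EuclideanSpace ℝ (Fin dd) → EuclideanSpace ℝ (Fin mm) → EuclideanSpace ℝ (Fin dd))
    (ξ : ℝ → EuclideanSpace ℝ (Fin mm)) (hξ : ContinuousOn ξ (Set.Ici 0))
    (fbar : EuclideanSpace ℝ (Fin dd) → EuclideanSpace ℝ (Fin dd))
    (hfbar : ∀ θ, Tendsto (fun T : ℝ => (1 / T) • ∫ t in (0:ℝ)..T, f θ (ξ t))
      atTop (nhds (fbar θ)))
    -- (A5): the gain process
    (a : ℝ → ℝ) (ha_pos : ∀ t : ℝ, 0 ≤ t → 0 < a t) (ha_cont : ContinuousOn a (Set.Ici 0))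
    (ha_dec : ∀ s t : ℝ, 0 ≤ s → s ≤ t → a t ≤ a s)
    (ha_to0 : Tendsto a atTop (nhds 0))
    (g : ℝ → ℝ) (hg : ∀ t, g t = ∫ r in (0:ℝ)..t, a r)
    (hg_top : Tendsto g atTop atTop)
    (ginv : ℝ → ℝ) (hginv : ∀ u : ℝ, 0 ≤ u → 0 ≤ ginv u ∧ g (ginv u) = u)
    (hginv' : ∀ t : ℝ, 0 ≤ t → ginv (g t) = t)
    -- (A2): the Lyapunov drift condition for the averaged flow
    (V : EuclideanSpace ℝ (Fin dd) → ℝ) (hV_cont : Continuous V)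
    (hV_nonneg : ∀ x, 0 ≤ V x) (c₀ : ℝ) (hc₀ : 0 < c₀)
    (hA2 : ∀ χ : ℝ → EuclideanSpace ℝ (Fin dd),
      (∀ w : ℝ, 0 ≤ w → HasDerivAt χ (fbar (χ w)) w) →
      ∀ s : ℝ, 0 ≤ s → ∀ T : ℝ, 0 ≤ T → T ≤ 1 → c₀ < ‖χ s‖ →
        V (χ (s + T)) - V (χ s) ≤ -T * ‖χ s‖)
    -- (A3)
    (b₀ : ℝ)
    (hA3 : ∀ θ, ∀ T : ℝ, 0 < T →
      ‖(1 / T) • (∫ t in (0:ℝ)..T, f θ (ξ t)) - fbar θ‖ ≤ (b₀ / T) * (1 + ‖θ‖))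
    -- (A4)
    (L : ℝ)
    (hV_lip : ∀ θ θ', |V θ' - V θ| ≤ L * ‖θ' - θ‖)
    (hfbar_lip : ∀ θ θ', ‖fbar θ' - fbar θ‖ ≤ L * ‖θ' - θ‖)
    (hf_lip : ∀ x θ θ', ‖f θ' x - f θ x‖ ≤ L * ‖θ' - θ‖)
    -- boundedness of f(0, ξ(·))
    (hf0 : ∃ M : ℝ, ∀ t : ℝ, 0 ≤ t → ‖f 0 (ξ t)‖ ≤ M) :
    ∃ b : ℝ, ∀ θhat : ℝ → EuclideanSpace ℝ (Fin dd),
      (∀ u : ℝ, 0 ≤ u → HasDerivAt θhat (f (θhat u) (ξ (ginv u))) u) →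
      ∃ u₁ : ℝ, ∀ u : ℝ, u₁ ≤ u → ‖θhat u‖ ≤ b := by
  obtain ⟨M, hM⟩ := hf0
  set K : ℝ := 1 + |L| + |M| + ‖fbar 0‖ with hKdef
  have hKL : L ≤ K := by
    linarith [le_abs_self L, abs_nonneg M, norm_nonneg (fbar 0)]
  have hK : 1 ≤ K := by
    linarith [abs_nonneg L, abs_nonneg M, norm_nonneg (fbar 0)]
  have hKM : M ≤ K := by
    linarith [le_abs_self M, abs_nonneg L, norm_nonneg (fbar 0)]
  have hKF : ‖fbar 0‖ ≤ K := by
    linarith [abs_nonneg M, abs_nonneg L, norm_nonneg (fbar 0)]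
  have hf_lip' : ∀ x θ θ', ‖f θ' x - f θ x‖ ≤ K * ‖θ' - θ‖ := fun x θ θ' =>
    (hf_lip x θ θ').trans (mul_le_mul_of_nonneg_right hKL (norm_nonneg _))
  have hfbar_lip' : ∀ θ θ', ‖fbar θ' - fbar θ‖ ≤ K * ‖θ' - θ‖ := fun θ θ' =>
    (hfbar_lip θ θ').trans (mul_le_mul_of_nonneg_right hKL (norm_nonneg _))
  have hV_lip' : ∀ θ θ', |V θ' - V θ| ≤ K * ‖θ' - θ‖ := fun θ θ' =>
    (hV_lip θ θ').trans (mul_le_mul_of_nonneg_right hKL (norm_nonneg _))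
  have hfb : ∀ θ t, 0 ≤ t → ‖f θ (ξ t)‖ ≤ K * (1 + ‖θ‖) := by
    intro θ t ht
    have h1 := hf_lip' (ξ t) 0 θ
    have h2 : ‖f θ (ξ t)‖ ≤ ‖f 0 (ξ t)‖ + ‖f θ (ξ t) - f 0 (ξ t)‖ := norm_le_norm_add_norm_sub' _ _
    rw [sub_zero] at h1
    linarith [hM t ht]
  have hfbarb : ∀ θ, ‖fbar θ‖ ≤ K * (1 + ‖θ‖) := by
    intro θ
    have h1 := hfbar_lip' 0 θ
    have h2 : ‖fbar θ‖ ≤ ‖fbar 0‖ + ‖fbar θ - fbar 0‖ := norm_le_norm_add_norm_sub' _ _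
    rw [sub_zero] at h1
    linarith
  -- integrability
  have hint : ∀ θ, c₀ < ‖θ‖ → ∀ s t : ℝ, 0 ≤ s → 0 ≤ t →
      IntervalIntegrable (fun t => f θ (ξ t)) MeasureTheory.volume s t := by
    intro θ hθ s t hs ht
    have hne : fbar θ ≠ 0 := by
      intro h0
      have h := hA2 (fun _ => θ) (fun w _ => by
        simp only [h0]; exact hasDerivAt_const w θ) 0 le_rfl 1 zero_le_one le_rfl hθ
      linarith
    obtain ⟨T, hT, hTi⟩ : ∃ T, max s t ≤ T ∧
        IntervalIntegrable (fun t => f θ (ξ t)) MeasureTheory.volume 0 T := by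
      by_contra hcon
      push Not at hcon
      apply hne
      refine tendsto_nhds_unique (hfbar θ) (tendsto_const_nhds.congr' ?_)
      filter_upwards [eventually_ge_atTop (max s t)] with T hT
      rw [intervalIntegral.integral_undef (hcon T hT), smul_zero]
    have hsT : s ≤ T := (le_max_left _ _).trans hT
    have htT : t ≤ T := (le_max_right _ _).trans hT
    refine hTi.mono_set ?_
    rw [Set.uIcc_of_le (hs.trans hsT)]
    intro x hx
    exact ⟨(le_min hs ht).trans hx.1, hx.2.trans (max_le hsT htT)⟩
  have aint : ∀ s t : ℝ, 0 ≤ s → 0 ≤ t → IntervalIntegrable a MeasureTheory.volume s t := by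
    intro s t hs ht
    exact (ha_cont.mono (fun x hx => (le_min hs ht).trans hx.1)).intervalIntegrable
  have hgmono : ∀ s t, 0 ≤ s → s ≤ t → g s ≤ g t := by
    intro s t hs hst
    have h1 := intervalIntegral.integral_interval_sub_left (aint 0 t le_rfl (hs.trans hst))
      (aint 0 s le_rfl hs)
    have h2 : 0 ≤ ∫ r in s..t, a r := intervalIntegral.integral_nonneg hst
      (fun r hr => (ha_pos r (hs.trans hr.1)).le)
    rw [hg s, hg t]
    linarith
  have hg0 : g 0 = 0 := by rw [hg]; simp
  obtain ⟨C, hC⟩ : ∃ C, C = K * Real.exp K := ⟨_, rfl⟩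
  have hC1 : 1 ≤ C := by
    rw [hC]
    have : 1 ≤ Real.exp K := Real.one_le_exp (by linarith)
    nlinarith
  have hKKC : 1 ≤ K * K * C := by nlinarith [mul_le_mul hK hK zero_le_one (by linarith : 0 ≤ K)]
  obtain ⟨T, hTdef⟩ : ∃ T, T = 1 / (16 * (K * K * C)) := ⟨_, rfl⟩
  have hT : 0 < T := by rw [hTdef]; positivity
  have hTeq : 16 * (K * K * C) * T = 1 := by rw [hTdef]; field_simp
  have hT1 : T ≤ 1 := by nlinarith
  have hb : 0 < K * (2 * K + 4 * |b₀|) := by positivity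
  obtain ⟨ts, hts1, hts⟩ : ∃ ts : ℝ, 1 ≤ ts ∧ ∀ t, ts ≤ t → a t * (K * (2 * K + 4 * |b₀|)) ≤ T / 8 := by
    have h1 : ∀ᶠ t in atTop, a t < T / 8 / (K * (2 * K + 4 * |b₀|)) :=
      ha_to0.eventually_lt_const (by positivity)
    obtain ⟨t', ht'⟩ := eventually_atTop.1 h1
    refine ⟨max 1 t', le_max_left _ _, fun t ht => ?_⟩
    have h2 := ht' t ((le_max_right _ _).trans ht)
    rw [lt_div_iff₀ hb] at h2
    exact h2.le
  have hgts : 0 ≤ g ts := by rw [← hg0]; exact hgmono 0 ts le_rfl (by linarith)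
  set c := max c₀ 1 with hcdef
  refine ⟨(c + 2 * (V 0 + K * (c + C * (1 + c))) / T) +
        C * (1 + (c + 2 * (V 0 + K * (c + C * (1 + c))) / T)), fun y hy => ?_⟩
  refine qsa_skeleton V hV_nonneg K C T c (g ts) hK (by linarith) hT hT1 (le_max_right _ _)
    ?_ y ?_ ?_
  · intro x
    have h := (le_abs_self _).trans (hV_lip' 0 x)
    rw [sub_zero] at h
    linarith
  · intro u hu s hs hs1
    have h := qsa_growth y (fun u => f (y u) (ξ (ginv u))) u K hK
      (fun v hv => hy v (by linarith)) (fun v hv => hfb _ _ (hginv v (by linarith)).1)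
      (u + s) ⟨by linarith, by linarith⟩
    rw [← hC, add_sub_cancel_left] at h
    have h2 : ‖y (u + s)‖ ≤ ‖y u‖ + ‖y (u + s) - y u‖ := norm_le_norm_add_norm_sub' _ _
    have h3 : C * (1 + ‖y u‖) * s ≤ C * (1 + ‖y u‖) * 1 := by gcongr
    linarith
  · intro u hu hcu
    have hu0 : 0 ≤ u := hgts.trans hu
    obtain ⟨ht00, hgt0⟩ := hginv u hu0
    obtain ⟨ht10, hgt1⟩ := hginv (u + T) (by linarith)
    have ht0ts : ts ≤ ginv u := by
      by_contra hlt
      push Not at hlt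
      have h1 := hgmono _ _ ht00 hlt.le
      rw [hgt0] at h1
      have h2 : u = g ts := le_antisymm h1 hu
      rw [h2, hginv' ts (by linarith)] at hlt
      exact lt_irrefl _ hlt
    have ht01 : ginv u ≤ ginv (u + T) := by
      by_contra hlt
      push Not at hlt
      have h1 := hgmono _ _ ht10 hlt.le
      rw [hgt0, hgt1] at h1
      linarith
    have hc0 : c₀ < ‖y u‖ := (le_max_left _ _).trans_lt hcu
    have hc1 : 1 < ‖y u‖ := (le_max_right _ _).trans_lt hcu
    obtain ⟨χ, hχ0, hχ⟩ := qsa_global_ode fbar K (by linarith) hfbar_lip' (y u)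
    have w1 := qsa_chi fbar K C T hK hC hT hT1 hfbar_lip' hfbarb χ (y u) hχ0 hχ
    have w2 := qsa_window f ξ (y u) (fbar (y u)) a ha_pos ha_cont ha_dec g hg ginv hginv' b₀ K C T
      (ginv u) (ginv (u + T)) hK hC hT hT1
      (by
        intro S hS
        have h := hA3 (y u) S hS
        have e : (∫ t in (0:ℝ)..S, f (y u) (ξ t)) - S • fbar (y u) =
            S • ((1 / S) • (∫ t in (0:ℝ)..S, f (y u) (ξ t)) - fbar (y u)) := by
          rw [smul_sub, smul_smul, mul_one_div_cancel hS.ne', one_smul]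
        rw [e, norm_smul, Real.norm_of_nonneg hS.le]
        calc _ ≤ S * (b₀ / S * (1 + ‖y u‖)) := mul_le_mul_of_nonneg_left h hS.le
          _ = _ := by field_simp)
      (hint (y u) hc0) hf_lip' hfb (hfbarb _) y (by linarith) ht01 (by rw [hgt0, hgt1]) hgmono
      (by rw [hgt0]) (fun v hv => (hginv v hv).1) hy
    rw [hgt0] at w2
    have dr := hA2 χ hχ 0 le_rfl T hT.le hT1 (by rw [hχ0]; exact hc0)
    rw [hχ0, zero_add] at dr
    have hVd := (le_abs_self _).trans (hV_lip' (χ T) (y (u + T)))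
    have hd : ‖y (u + T) - χ T‖ ≤ ‖y (u + T) - y u - T • fbar (y u)‖ +
        ‖χ T - y u - T • fbar (y u)‖ := by
      have e : y (u + T) - χ T = (y (u + T) - y u - T • fbar (y u)) -
        (χ T - y u - T • fbar (y u)) := by abel
      rw [e]
      exact norm_sub_le _ _
    have ha := hts _ ht0ts
    have hap := ha_pos _ ht00
    generalize ‖y u‖ = x at *
    have q1 : a (ginv u) * ((2 * K + 4 * b₀) * (1 + x)) ≤
        a (ginv u) * ((2 * K + 4 * |b₀|) * (1 + x)) := by
      have := le_abs_self b₀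
      have : 0 ≤ 1 + x := by linarith
      gcongr
    have q2 : K * (a (ginv u) * ((2 * K + 4 * |b₀|) * (1 + x))) ≤ T / 8 * (1 + x) := by
      have := mul_le_mul_of_nonneg_right ha (by linarith : 0 ≤ 1 + x)
      linarith
    have q3 : K * (2 * (K * C * (1 + x) * T * T)) = T / 8 * (1 + x) := by
      linear_combination (T / 8 * (1 + x)) * hTeq
    have q4 : K * ‖y (u + T) - χ T‖ ≤ K * (2 * (K * C * (1 + x) * T * T) +
        a (ginv u) * ((2 * K + 4 * |b₀|) * (1 + x))) := by
      gcongr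
      linarith
    rw [mul_add] at q4
    have q5 : T * 1 ≤ T * x := mul_le_mul_of_nonneg_left hc1.le hT.le
    linarith
end

section
/- Verification of Assumption (A2) for a linear Hurwitz system. Let A be a real d×d Hurwitz matrix (every eigenvalue of A, viewed as a complex matrix, has strictly negative real part), and let P be a real symmetric positive definite d×d matrix satisfying the Lyapunov equation P·A + Aᵀ·P = −I. Then there exist constants k > 0 and c₀ > 0 such that the function V(x) = k·√(xᵀ P x) is Lipschitz on ℝ^d, and for every solution χ of the linear ODE dχ/dt(t) = A·χ(t), every s ≥ 0, and every 0 ≤ T ≤ 1, if ‖χ(s)‖ > c₀ then V(χ(s+T)) − V(χ(s)) ≤ −T·‖χ(s)‖. -/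
open Filter

theorem A2_core {E : Type*} [NormedAddCommGroup E] [InnerProductSpace ℝ E]
    (L : E →L[ℝ] E) (A : E → E) (K M : ℝ) (hK : 0 < K) (hM : 0 < M)
    (h1 : ∀ x, ‖x‖ ≤ K * ‖L x‖) (h2 : ∀ x, ‖L x‖ ≤ M * ‖x‖)
    (hA : ∀ x, 2 * inner ℝ (L x) (L (A x)) = -‖x‖ ^ 2)
    (χ : ℝ → E) (hχ : ∀ t : ℝ, 0 ≤ t → HasDerivAt χ (A (χ t)) t)
    (s : ℝ) (hs : 0 ≤ s) (T : ℝ) (hT : 0 ≤ T) (hT1 : T ≤ 1) (hc : 0 < ‖χ s‖) :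
    (2 * M * (K ^ 2 * M ^ 2 * Real.exp (K ^ 2))) * ‖L (χ (s + T))‖
      - (2 * M * (K ^ 2 * M ^ 2 * Real.exp (K ^ 2))) * ‖L (χ s)‖ ≤ -T * ‖χ s‖ := by
  set D := K ^ 2 * M ^ 2 * Real.exp (K ^ 2) with hD
  have hDpos : 0 < D := by positivity
  have hq : ∀ t, 0 ≤ t → HasDerivAt (fun t => ‖L (χ t)‖ ^ 2) (-‖χ t‖ ^ 2) t := by
    intro t ht
    have := (L.hasFDerivAt.comp_hasDerivAt t (hχ t ht)).norm_sq
    rw [← hA]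
    exact this
  have hge : ∀ t ∈ Set.Icc s (s + T), ‖L (χ s)‖ ^ 2 ≤ Real.exp (K ^ 2) * ‖L (χ t)‖ ^ 2 := by
    intro t ht
    have hd : ∀ u, 0 ≤ u → HasDerivAt (fun u => ‖L (χ u)‖ ^ 2 * Real.exp (K ^ 2 * (u - s)))
        ((-‖χ u‖ ^ 2) * Real.exp (K ^ 2 * (u - s)) +
          ‖L (χ u)‖ ^ 2 * (Real.exp (K ^ 2 * (u - s)) * (K ^ 2 * 1))) u := by
      intro u hu
      exact (hq u hu).mul ((((hasDerivAt_id u).sub_const s).const_mul (K ^ 2)).exp)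
    have hmono : MonotoneOn (fun u => ‖L (χ u)‖ ^ 2 * Real.exp (K ^ 2 * (u - s)))
        (Set.Icc s (s + T)) := by
      apply monotoneOn_of_hasDerivWithinAt_nonneg (convex_Icc _ _)
      · intro u hu
        exact (hd u (hs.trans hu.1)).continuousAt.continuousWithinAt
      · intro u hu
        rw [interior_Icc] at hu
        exact (hd u (hs.trans hu.1.le)).hasDerivWithinAt
      · intro u hu
        have e : ‖χ u‖ ^ 2 ≤ K ^ 2 * ‖L (χ u)‖ ^ 2 := by
          rw [← mul_pow]; exact pow_le_pow_left₀ (norm_nonneg _) (h1 _) 2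
        have := mul_nonneg (sub_nonneg.2 e) (Real.exp_pos (K ^ 2 * (u - s))).le
        linarith
    have h := hmono (Set.left_mem_Icc.2 (by linarith)) ht ht.1
    simp only [sub_self, mul_zero, Real.exp_zero, mul_one] at h
    refine h.trans ?_
    rw [mul_comm]
    gcongr
    have : t - s ≤ 1 := by linarith [ht.2]
    nlinarith [sq_nonneg K]
  have hlow : ∀ t ∈ Set.Icc s (s + T), ‖χ s‖ ^ 2 / D ≤ ‖χ t‖ ^ 2 := by
    intro t ht
    rw [div_le_iff₀ hDpos]
    calc ‖χ s‖ ^ 2 ≤ (K * ‖L (χ s)‖) ^ 2 := by gcongr; exact h1 _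
      _ = K ^ 2 * ‖L (χ s)‖ ^ 2 := by ring
      _ ≤ K ^ 2 * (Real.exp (K ^ 2) * ‖L (χ t)‖ ^ 2) := by gcongr; exact hge t ht
      _ ≤ K ^ 2 * (Real.exp (K ^ 2) * (M * ‖χ t‖) ^ 2) := by gcongr; exact h2 _
      _ = ‖χ t‖ ^ 2 * D := by rw [hD]; ring
  have hdec : ‖L (χ (s + T))‖ ^ 2 + ‖χ s‖ ^ 2 / D * T ≤ ‖L (χ s)‖ ^ 2 := by
    have hd : ∀ u, 0 ≤ u → HasDerivAt (fun u => ‖L (χ u)‖ ^ 2 + ‖χ s‖ ^ 2 / D * (u - s))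
        (-‖χ u‖ ^ 2 + ‖χ s‖ ^ 2 / D * 1) u := by
      intro u hu
      exact (hq u hu).add (((hasDerivAt_id u).sub_const s).const_mul _)
    have hanti : AntitoneOn (fun u => ‖L (χ u)‖ ^ 2 + ‖χ s‖ ^ 2 / D * (u - s))
        (Set.Icc s (s + T)) := by
      apply antitoneOn_of_hasDerivWithinAt_nonpos (convex_Icc _ _)
      · intro u hu
        exact (hd u (hs.trans hu.1)).continuousAt.continuousWithinAt
      · intro u hu
        rw [interior_Icc] at hu
        exact (hd u (hs.trans hu.1.le)).hasDerivWithinAt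
      · intro u hu
        have := hlow u (interior_subset hu)
        linarith
    have h := hanti (Set.left_mem_Icc.2 (by linarith)) (Set.right_mem_Icc.2 (by linarith))
      (by linarith : s ≤ s + T)
    simpa using h
  set a := ‖L (χ (s + T))‖
  set b := ‖L (χ s)‖
  have ha : 0 ≤ a := norm_nonneg _
  have hb : 0 ≤ b := norm_nonneg _
  have hbM : b ≤ M * ‖χ s‖ := h2 _
  have h0 : 0 ≤ ‖χ s‖ ^ 2 / D * T := by positivity
  have hab : a ≤ b := by
    apply le_of_sq_le_sq _ hb
    linarith
  have h3 : ‖χ s‖ ^ 2 * T ≤ D * ((b - a) * (b + a)) := by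
    have : ‖χ s‖ ^ 2 * T = D * (‖χ s‖ ^ 2 / D * T) := by field_simp
    rw [this]
    apply mul_le_mul_of_nonneg_left _ hDpos.le
    linarith
  have h4 : D * ((b - a) * (b + a)) ≤ D * ((b - a) * (2 * (M * ‖χ s‖))) := by
    have : 0 ≤ b - a := by linarith
    gcongr
    linarith
  have h5 : ‖χ s‖ * (‖χ s‖ * T) ≤ ‖χ s‖ * (2 * M * D * (b - a)) := by linarith
  have := le_of_mul_le_mul_left h5 hc
  linarith

open scoped MatrixOrder in
theorem A2_factor {d : ℕ} (P : Matrix (Fin d) (Fin d) ℝ) (h : P.PosSemidef) :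
    ∃ B : Matrix (Fin d) (Fin d) ℝ, P = B.transpose * B := by
  obtain ⟨B, hB⟩ := CStarAlgebra.nonneg_iff_eq_star_mul_self.mp h.nonneg
  refine ⟨B, ?_⟩
  rw [hB, Matrix.star_eq_conjTranspose, Matrix.conjTranspose_eq_transpose_of_trivial]

/-- Verification of Assumption (A2) for a linear Hurwitz system: if `A` is Hurwitz and
`P` is symmetric positive definite with `PA + AᵀP = -I`, then for suitable `k, c₀ > 0`
the function `V(x) = k √(xᵀPx)` is Lipschitz and satisfies the drift condition
`V(χ(s+T)) - V(χ(s)) ≤ -T‖χ(s)‖` along solutions of `dχ/dt = Aχ` whenever `‖χ(s)‖ > c₀`,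
`s ≥ 0`, `0 ≤ T ≤ 1`. -/
theorem A2_for_linear_Hurwitz_system
    (d : ℕ) (A : Matrix (Fin d) (Fin d) ℝ)
    (hHurwitz : ∀ μ ∈ spectrum ℂ (A.map (Complex.ofReal : ℝ → ℂ)), μ.re < 0)
    (P : Matrix (Fin d) (Fin d) ℝ) (hP_symm : P.IsSymm) (hP_pos : P.PosDef)
    (hLyap : P * A + A.transpose * P = -1) :
    ∃ k c₀ : ℝ, 0 < k ∧ 0 < c₀ ∧
      (∃ K : NNReal, LipschitzWith K
        (fun x : EuclideanSpace ℝ (Fin d) => k * Real.sqrt (∑ i, ∑ j, x i * P i j * x j))) ∧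
      ∀ χ : ℝ → EuclideanSpace ℝ (Fin d),
        (∀ t : ℝ, 0 ≤ t → HasDerivAt χ (Matrix.toEuclideanLin A (χ t)) t) →
        ∀ s : ℝ, 0 ≤ s → ∀ T : ℝ, 0 ≤ T → T ≤ 1 → c₀ < ‖χ s‖ →
          k * Real.sqrt (∑ i, ∑ j, χ (s + T) i * P i j * χ (s + T) j)
            - k * Real.sqrt (∑ i, ∑ j, χ s i * P i j * χ s j)
          ≤ -T * ‖χ s‖ := by
  obtain ⟨B, hB⟩ := A2_factor P hP_pos.posSemidef
  let L : EuclideanSpace ℝ (Fin d) →L[ℝ] EuclideanSpace ℝ (Fin d) :=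
    LinearMap.toContinuousLinearMap (Matrix.toEuclideanLin B)
  have hin : ∀ x y : EuclideanSpace ℝ (Fin d),
      inner ℝ (L x) (L y) = x.ofLp ⬝ᵥ (P.mulVec y.ofLp) := by
    intro x y
    rw [EuclideanSpace.inner_eq_star_dotProduct]
    simp only [L, LinearMap.coe_toContinuousLinearMap', Matrix.ofLp_toEuclideanLin_apply,
      star_trivial]
    rw [hB, ← Matrix.mulVec_mulVec, Matrix.dotProduct_mulVec x.ofLp, Matrix.vecMul_transpose,
      dotProduct_comm]
  have hq : ∀ x : EuclideanSpace ℝ (Fin d), ∑ i, ∑ j, x i * P i j * x j = ‖L x‖ ^ 2 := by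
    intro x
    rw [← real_inner_self_eq_norm_sq, hin]
    simp [dotProduct, Matrix.mulVec, Finset.mul_sum, mul_assoc]
  have hsq : ∀ x : EuclideanSpace ℝ (Fin d),
      Real.sqrt (∑ i, ∑ j, x i * P i j * x j) = ‖L x‖ := by
    intro x
    rw [hq, Real.sqrt_sq (norm_nonneg _)]
  have hker : LinearMap.ker L.toLinearMap = ⊥ := by
    rw [LinearMap.ker_eq_bot']
    intro x hx
    by_contra hne
    have h := hin x x
    have hx' : L x = 0 := hx
    rw [hx', inner_zero_left] at h
    have hne' : x.ofLp ≠ 0 := by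
      intro h0; apply hne; ext i; simp [h0]
    have := hP_pos.dotProduct_mulVec_pos hne'
    simp only [star_trivial] at this
    linarith
  obtain ⟨K, hK, hanti⟩ := LinearMap.exists_antilipschitzWith L.toLinearMap hker
  have hA : ∀ x : EuclideanSpace ℝ (Fin d),
      2 * inner ℝ (L x) (L (Matrix.toEuclideanLin A x)) = -‖x‖ ^ 2 := by
    intro x
    rw [hin, Matrix.ofLp_toEuclideanLin_apply, ← real_inner_self_eq_norm_sq,
      EuclideanSpace.inner_eq_star_dotProduct, star_trivial]
    have h := congrArg (fun Q => x.ofLp ⬝ᵥ (Q.mulVec x.ofLp)) hLyap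
    simp only [Matrix.add_mulVec, Matrix.neg_mulVec, Matrix.one_mulVec, dotProduct_add,
      dotProduct_neg, ← Matrix.mulVec_mulVec] at h
    rw [Matrix.dotProduct_mulVec x.ofLp A.transpose, Matrix.vecMul_transpose,
      Matrix.dotProduct_mulVec _ P, ← Matrix.mulVec_transpose, hP_symm.eq,
      dotProduct_comm (P.mulVec x.ofLp)] at h
    have h' : A.mulVec x.ofLp ⬝ᵥ P.mulVec x.ofLp = x.ofLp ⬝ᵥ P.mulVec (A.mulVec x.ofLp) := by
      rw [Matrix.dotProduct_mulVec x.ofLp P, ← Matrix.mulVec_transpose, hP_symm.eq,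
        dotProduct_comm]
    linarith
  have hK0 : (0 : ℝ) < K := by exact_mod_cast hK
  have hM0 : 0 < ‖L‖ + 1 := by positivity
  refine ⟨2 * (‖L‖ + 1) * ((K : ℝ) ^ 2 * (‖L‖ + 1) ^ 2 * Real.exp ((K : ℝ) ^ 2)), 1,
    by positivity, one_pos, ?_, ?_⟩
  · simp only [hsq]
    generalize hk : 2 * (‖L‖ + 1) * ((K : ℝ) ^ 2 * (‖L‖ + 1) ^ 2 * Real.exp ((K : ℝ) ^ 2)) = k
    have hk0 : 0 ≤ k := by rw [← hk]; positivity
    refine ⟨Real.toNNReal (k * ‖L‖), LipschitzWith.of_dist_le_mul fun x y => ?_⟩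
    rw [Real.coe_toNNReal _ (by positivity), Real.dist_eq, dist_eq_norm, ← mul_sub, abs_mul,
      abs_of_nonneg hk0, mul_assoc]
    gcongr
    refine (abs_norm_sub_norm_le _ _).trans ?_
    rw [← map_sub]
    exact L.le_opNorm _
  · intro χ hχ s hs T hT hT1 hc
    rw [hsq, hsq]
    refine A2_core L (fun x => Matrix.toEuclideanLin A x) K (‖L‖ + 1) hK0 hM0 ?_ ?_ hA χ hχ
      s hs T hT hT1 (by linarith)
    · intro x
      have := hanti.le_mul_dist x 0
      simpa using this
    · intro x
      refine (L.le_opNorm x).trans ?_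
      gcongr
      linarith
end
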